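/- arXiv:2004.03308 — 3 statements merged into one kernel-verified Lean document; each statement's English description precedes it below -/
import Mathlib

section
/- Let p and q be primes with q ≡ 1 (mod 4), let p* ∈ P*₋ have underlying prime p (so p* = -p with p ≡ 3 (mod 4), or p* ∈ {-4, -8}), assume p ≠ q, and let L = ℚ(√(p*·q)). Then 4 does not divide the class number h(L) if and only if one of the following holds: (1) p is odd and the Legendre symbols satisfy (q/p) = (-p/q) = -1; (2) p = 2 and q ≡ 5 (mod 8). -/
open NumberField

/-- `Qsqrt m` is the subfield `ℚ(√m)` of `ℂ`, generated by a square root of `m`. -/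
noncomputable def Qsqrt (m : ℤ) : IntermediateField ℚ ℂ :=
  IntermediateField.adjoin ℚ {(m : ℂ) ^ ((1 : ℂ) / 2)}

open scoped nonZeroDivisors

structure QD {K : Type*} [Field K] [NumberField K] (σ : 𝓞 K ≃+* 𝓞 K) (s : 𝓞 K) (D : ℤ) : Prop where
  fr : Module.finrank ℚ K = 2
  inv : ∀ x, σ (σ x) = x
  sq : s ^ 2 = (D : 𝓞 K)
  conj : σ s = -s
  neg : D < 0
  half : ∀ x : 𝓞 K, ∃ a b : ℤ, 2 * x = a + b * s
  nrm : ∀ x : 𝓞 K, ∃ n : ℤ, x * σ x = n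

namespace QD
variable {K : Type*} [Field K] [NumberField K] {σ : 𝓞 K ≃+* 𝓞 K} {s : 𝓞 K} {D : ℤ}

theorem absNorm_int (h : QD σ s D) (n : ℤ) :
    Ideal.absNorm (Ideal.span {(n : 𝓞 K)}) = n.natAbs ^ 2 := by
  rw [Ideal.absNorm_span_singleton]
  have := Algebra.norm_algebraMap_of_basis (RingOfIntegers.basis K) n
  rw [eq_intCast] at this
  rw [this, Int.natAbs_pow, ← Module.finrank_eq_card_basis (RingOfIntegers.basis K),
    NumberField.RingOfIntegers.rank, h.fr]

theorem dvd_int (h : QD σ s D) {m n : ℤ} (hd : (m : 𝓞 K) ∣ n) : m ∣ n := by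
  have := Ideal.span_singleton_le_span_singleton.2 hd
  have := Ideal.absNorm_dvd_absNorm_of_le this
  rw [h.absNorm_int, h.absNorm_int] at this
  exact Int.natAbs_dvd_natAbs.1 ((Nat.pow_dvd_pow_iff two_ne_zero).1 this)

theorem absNorm_map (_h : QD σ s D) (I : Ideal (𝓞 K)) :
    Ideal.absNorm (I.map (σ : 𝓞 K →+* 𝓞 K)) = Ideal.absNorm I := by
  rw [Ideal.absNorm_apply, Ideal.absNorm_apply, Submodule.cardQuot_apply, Submodule.cardQuot_apply]
  exact (Nat.card_congr (Ideal.quotientEquiv I _ σ rfl).toEquiv).symm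

theorem absNorm_elem (h : QD σ s D) {x : 𝓞 K} {n : ℤ} (hx : x * σ x = n) :
    Ideal.absNorm (Ideal.span {x}) = n.natAbs := by
  have h1 := h.absNorm_int n
  rw [← hx, ← Ideal.span_singleton_mul_span_singleton, map_mul] at h1
  have h2 := h.absNorm_map (Ideal.span {x})
  rw [Ideal.map_span, Set.image_singleton] at h2
  change Ideal.absNorm (Ideal.span {σ x}) = _ at h2
  rw [h2, ← pow_two] at h1
  exact Nat.pow_left_injective (n := 2) (by norm_num) h1

theorem tr (h : QD σ s D) (x : 𝓞 K) : ∃ t : ℤ, x + σ x = t := by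
  obtain ⟨a, b, hab⟩ := h.half x
  refine ⟨a, ?_⟩
  have h2 := congrArg σ hab
  simp only [map_mul, map_add, map_ofNat, map_intCast, h.conj] at h2
  have : (2 : 𝓞 K) * (x + σ x) = 2 * a := by linear_combination hab + h2
  exact mul_left_cancel₀ two_ne_zero this

theorem form (h : QD σ s D) {x : 𝓞 K} {n : ℤ} (hx : x * σ x = n) :
    ∃ a b : ℤ, a ^ 2 - D * b ^ 2 = 4 * n := by
  obtain ⟨a, b, hab⟩ := h.half x
  refine ⟨a, b, ?_⟩
  have h2 := congrArg σ hab
  simp only [map_mul, map_add, map_ofNat, map_intCast, h.conj] at h2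
  have : ((a ^ 2 - D * b ^ 2 : ℤ) : 𝓞 K) = ((4 * n : ℤ) : 𝓞 K) := by
    push_cast
    rw [← hx, ← h.sq]
    have : (a ^ 2 - s ^ 2 * b ^ 2 : 𝓞 K) = (a + b * s) * (a + b * -s) := by ring
    rw [this, ← hab, ← h2]; ring
  exact_mod_cast this

theorem nonneg (h : QD σ s D) {x : 𝓞 K} {n : ℤ} (hx : x * σ x = n) : 0 ≤ n := by
  obtain ⟨a, b, hab⟩ := h.form hx
  have := h.neg
  nlinarith [sq_nonneg a, sq_nonneg b]

theorem form' (h : QD σ s D) (x : 𝓞 K) :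
    ∃ a b : ℤ, a ^ 2 - D * b ^ 2 = 4 * (Ideal.absNorm (Ideal.span {x}) : ℤ) := by
  obtain ⟨n, hn⟩ := h.nrm x
  obtain ⟨a, b, hab⟩ := h.form hn
  refine ⟨a, b, ?_⟩
  rw [h.absNorm_elem hn, hab, Int.natAbs_of_nonneg (h.nonneg hn)]

theorem dvd_of (_h : QD σ s D) {w : 𝓞 K} {d t n : ℤ} (hd : d ≠ 0)
    (h1 : w + σ w = ((d * t : ℤ) : 𝓞 K)) (h2 : w * σ w = ((d ^ 2 * n : ℤ) : 𝓞 K)) :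
    (d : 𝓞 K) ∣ w := by
  have hdK : (d : K) ≠ 0 := by exact_mod_cast hd
  have hinteg : IsIntegral ℤ ((w : K) / d) := by
    refine ⟨Polynomial.X ^ 2 - Polynomial.C t * Polynomial.X + Polynomial.C n, ?_, ?_⟩
    · monicity!
    · have h3 : w ^ 2 - ((d * t : ℤ) : 𝓞 K) * w + ((d ^ 2 * n : ℤ) : 𝓞 K) = 0 := by
        rw [← h1, ← h2]; ring
      have h4 := congrArg (algebraMap (𝓞 K) K) h3
      simp only [map_add, map_sub, map_mul, map_pow, map_intCast, map_zero] at h4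
      push_cast at h4
      simp only [Polynomial.eval₂_add, Polynomial.eval₂_sub, Polynomial.eval₂_mul,
        Polynomial.eval₂_pow, Polynomial.eval₂_X, Polynomial.eval₂_C]
      simp only [eq_intCast]
      field_simp
      linear_combination h4
  obtain ⟨z, hz⟩ : ∃ z : 𝓞 K, (z : K) = (w : K) / d := ⟨⟨_, hinteg⟩, rfl⟩
  refine ⟨z, ?_⟩
  apply RingOfIntegers.coe_injective
  rw [map_mul, map_intCast]
  change (w : K) = d * (z : K)
  rw [hz]
  field_simp

theorem mul_conj (h : QD σ s D) (I : Ideal (𝓞 K)) (hI : I ≠ ⊥) :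
    ∃ d : ℕ, d ≠ 0 ∧ I * I.map (σ : 𝓞 K →+* 𝓞 K) = Ideal.span {(d : 𝓞 K)} := by
  choose N hN using h.nrm
  let J : Ideal ℤ := Ideal.span (N '' I)
  obtain ⟨d, hd⟩ := (IsPrincipalIdealRing.principal J).principal
  change J = Ideal.span {d} at hd
  have hmem : ∀ x ∈ I, d ∣ N x := fun x hx => by
    rw [← Ideal.mem_span_singleton, ← hd]
    exact Ideal.subset_span ⟨x, hx, rfl⟩
  have key : I * I.map (σ : 𝓞 K →+* 𝓞 K) = Ideal.span {(d : 𝓞 K)} := by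
    apply le_antisymm
    · rw [Ideal.mul_le]
      intro x hx y hy
      obtain ⟨y, hy', rfl⟩ := (Ideal.mem_map_of_equiv σ y).1 hy
      rw [Ideal.mem_span_singleton]
      by_cases hd0 : d = 0
      · have h1 := hmem x hx
        rw [hd0, zero_dvd_iff] at h1
        have := hN x
        rw [h1, Int.cast_zero, mul_eq_zero] at this
        have : x = 0 := by
          rcases this with h | h
          · exact h
          · exact (map_eq_zero_iff σ σ.injective).1 h
        simp [this]
      obtain ⟨u, hu⟩ := hmem x hx
      obtain ⟨v, hv⟩ := hmem y hy'
      obtain ⟨r, hr⟩ := hmem (x + y) (I.add_mem hx hy')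
      refine h.dvd_of hd0 (t := r - u - v) (n := u * v) ?_ ?_
      · have e1 := hN x
        have e2 := hN y
        have e3 := hN (x + y)
        rw [hu] at e1; rw [hv] at e2; rw [hr] at e3
        push_cast at *
        rw [map_add] at e3
        rw [map_mul, h.inv]
        linear_combination e3 - e1 - e2
      · have e1 := hN x
        have e2 := hN y
        rw [hu] at e1; rw [hv] at e2
        push_cast at *
        rw [map_mul, h.inv]
        linear_combination (y * σ y) * e1 + d * u * e2
    · rw [Ideal.span_singleton_le_iff_mem]
      have : J ≤ (I * I.map (σ : 𝓞 K →+* 𝓞 K)).comap (Int.castRingHom (𝓞 K)) := by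
        rw [Ideal.span_le]
        rintro _ ⟨x, hx, rfl⟩
        rw [SetLike.mem_coe, Ideal.mem_comap]
        change ((N x : ℤ) : 𝓞 K) ∈ _
        rw [← hN]
        exact Ideal.mul_mem_mul hx (Ideal.mem_map_of_mem (σ : 𝓞 K →+* 𝓞 K) hx)
      have hdJ : d ∈ J := by rw [hd]; exact Ideal.mem_span_singleton_self d
      exact this hdJ
  refine ⟨d.natAbs, ?_, ?_⟩
  · intro h0
    rw [Int.natAbs_eq_zero] at h0
    rw [h0, Int.cast_zero, Ideal.span_singleton_zero] at key
    rcases Ideal.mul_eq_bot.1 key with h1 | h1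
    · exact hI h1
    · exact hI ((Ideal.map_eq_bot_iff_of_injective σ.injective).1 h1)
  · rw [key, Ideal.span_singleton_eq_span_singleton]
    rcases Int.natAbs_eq d with h1 | h1
    · conv_lhs => rw [h1]
      simp
    · conv_lhs => rw [h1]
      simp

open Classical in
/-- class of an ideal, trivial for the zero ideal -/
noncomputable def cl (I : Ideal (𝓞 K)) : ClassGroup (𝓞 K) :=
  if h : I = ⊥ then 1 else ClassGroup.mk0 ⟨I, mem_nonZeroDivisors_of_ne_zero h⟩

theorem cl_eq {I : Ideal (𝓞 K)} (h : I ≠ ⊥) :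
    cl I = ClassGroup.mk0 ⟨I, mem_nonZeroDivisors_of_ne_zero h⟩ := by
  rw [cl, dif_neg h]

theorem cl_mul {I J : Ideal (𝓞 K)} (hI : I ≠ ⊥) (hJ : J ≠ ⊥) : cl (I * J) = cl I * cl J := by
  rw [cl_eq hI, cl_eq hJ, cl_eq (mul_ne_zero hI hJ), ← map_mul]
  rfl

theorem cl_span (x : 𝓞 K) : cl (Ideal.span {x}) = 1 := by
  by_cases h : Ideal.span {x} = ⊥
  · rw [cl, dif_pos h]
  · rw [cl_eq h, ClassGroup.mk0_eq_one_iff]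
    exact ⟨x, rfl⟩

theorem cl_one {I : Ideal (𝓞 K)} (hI : I ≠ ⊥) (h : cl I = 1) : ∃ x, x ≠ 0 ∧ I = Ideal.span {x} := by
  rw [cl_eq hI, ClassGroup.mk0_eq_one_iff] at h
  obtain ⟨x, hx⟩ := h
  refine ⟨x, ?_, hx⟩
  rintro rfl
  apply hI
  rw [hx]; simp

theorem cl_pow {I : Ideal (𝓞 K)} (hI : I ≠ ⊥) (n : ℕ) : cl (I ^ n) = cl I ^ n := by
  induction n with
  | zero => 
    rw [pow_zero, pow_zero, Ideal.one_eq_top, ← Ideal.span_singleton_one, cl_span]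
  | succ n ih => rw [pow_succ, cl_mul (pow_ne_zero n hI) hI, ih, pow_succ]

theorem cl_surj (c : ClassGroup (𝓞 K)) : ∃ I : Ideal (𝓞 K), I ≠ ⊥ ∧ cl I = c := by
  obtain ⟨⟨I, hI⟩, rfl⟩ := ClassGroup.mk0_surjective c
  have := nonZeroDivisors.ne_zero hI
  exact ⟨I, this, cl_eq this⟩

theorem map_map (h : QD σ s D) (I : Ideal (𝓞 K)) :
    (I.map (σ : 𝓞 K →+* 𝓞 K)).map (σ : 𝓞 K →+* 𝓞 K) = I := by
  rw [Ideal.map_map]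
  have : (σ : 𝓞 K →+* 𝓞 K).comp (σ : 𝓞 K →+* 𝓞 K) = RingHom.id _ := by
    ext x; simp [h.inv]
  rw [this, Ideal.map_id]

theorem map_span' (x : 𝓞 K) :
    (Ideal.span {x}).map (σ : 𝓞 K →+* 𝓞 K) = Ideal.span {σ x} := by
  rw [Ideal.map_span, Set.image_singleton]; rfl

theorem map_ne (I : Ideal (𝓞 K)) (hI : I ≠ ⊥) : I.map (σ : 𝓞 K →+* 𝓞 K) ≠ ⊥ := fun h1 =>
  hI ((Ideal.map_eq_bot_iff_of_injective σ.injective).1 h1)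

theorem fixed_mem (h : QD σ s D) (H : Subgroup (ClassGroup (𝓞 K)))
    (hH : ∀ M : Ideal (𝓞 K), M.IsMaximal → M ≠ ⊥ → M.map (σ : 𝓞 K →+* 𝓞 K) = M → cl M ∈ H) :
    ∀ (n : ℕ) (I : Ideal (𝓞 K)), Ideal.absNorm I = n → I ≠ ⊥ →
      I.map (σ : 𝓞 K →+* 𝓞 K) = I → cl I ∈ H := by
  intro n
  induction n using Nat.strong_induction_on with
  | _ n ih =>
  intro I hn hI hfix
  by_cases htop : I = ⊤
  · rw [htop, ← Ideal.span_singleton_one, cl_span]; exact H.one_mem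
  obtain ⟨M, hM, hIM⟩ := Ideal.exists_le_maximal I htop
  obtain ⟨J, hJ⟩ := Ideal.dvd_iff_le.2 hIM
  have hM0 : M ≠ ⊥ := by rintro rfl; exact hI (by rw [hJ, Ideal.bot_mul])
  have hJ0 : J ≠ ⊥ := by rintro rfl; exact hI (by rw [hJ, Ideal.mul_bot])
  have hpos : ∀ A : Ideal (𝓞 K), A ≠ ⊥ → 0 < Ideal.absNorm A := fun A hA =>
    Nat.pos_of_ne_zero fun h0 => hA (Ideal.absNorm_eq_zero_iff.1 h0)
  have hM1 : 1 < Ideal.absNorm M := by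
    have := hpos M hM0
    have : Ideal.absNorm M ≠ 1 := fun h1 => hM.ne_top (Ideal.absNorm_eq_one_iff.1 h1)
    omega
  by_cases hMf : M.map (σ : 𝓞 K →+* 𝓞 K) = M
  · have hJf : J.map (σ : 𝓞 K →+* 𝓞 K) = J := by
      have := hfix
      rw [hJ, Ideal.map_mul, hMf] at this
      exact mul_left_cancel₀ hM0 this
    rw [hJ, cl_mul hM0 hJ0]
    refine H.mul_mem (hH M hM hM0 hMf) (ih _ ?_ J rfl hJ0 hJf)
    rw [← hn, hJ, map_mul]
    have := hpos J hJ0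
    nlinarith
  · have hp : (M.map (σ : 𝓞 K →+* 𝓞 K)).IsPrime := Ideal.map_isPrime_of_equiv σ
    have hp' := Ideal.prime_of_isPrime (map_ne (σ := σ) M hM0) hp
    have hdvd : M.map (σ : 𝓞 K →+* 𝓞 K) ∣ M * J := by
      rw [← hJ, ← hfix, hJ, Ideal.map_mul]
      exact dvd_mul_right _ _
    rcases hp'.dvd_or_dvd hdvd with h1 | h1
    · exact absurd (hM.eq_of_le hp.ne_top (Ideal.dvd_iff_le.1 h1)).symm hMf
    obtain ⟨A, hA⟩ := h1
    have hA0 : A ≠ ⊥ := by rintro rfl; exact hJ0 (by rw [hA, Ideal.mul_bot])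
    have hMM := mul_ne_zero hM0 (map_ne (σ := σ) M hM0)
    have hIA : I = (M * M.map (σ : 𝓞 K →+* 𝓞 K)) * A := by rw [hJ, hA, mul_assoc]
    have hAf : A.map (σ : 𝓞 K →+* 𝓞 K) = A := by
      have := hfix
      rw [hIA, Ideal.map_mul, Ideal.map_mul, h.map_map, mul_comm (M.map _) M] at this
      exact mul_left_cancel₀ hMM this
    obtain ⟨d, hd0, hd⟩ := h.mul_conj M hM0
    rw [hIA, cl_mul hMM hA0, hd, cl_span, one_mul]
    refine ih _ ?_ A rfl hA0 hAf
    rw [← hn, hIA, map_mul, map_mul]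
    have := hpos A hA0
    have := hpos _ (map_ne (σ := σ) M hM0)
    have : 1 < Ideal.absNorm M * Ideal.absNorm (M.map (σ : 𝓞 K →+* 𝓞 K)) := by nlinarith
    nlinarith

theorem torsion_mem (h : QD σ s D) (H : Subgroup (ClassGroup (𝓞 K)))
    (hH : ∀ M : Ideal (𝓞 K), M.IsMaximal → M ≠ ⊥ → M.map (σ : 𝓞 K →+* 𝓞 K) = M → cl M ∈ H)
    (c : ClassGroup (𝓞 K)) (hc : c ^ 2 = 1) : c ∈ H := by
  obtain ⟨I, hI, rfl⟩ := cl_surj c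
  rw [← cl_pow hI] at hc
  obtain ⟨α, hα0, hα⟩ := cl_one (pow_ne_zero 2 hI) hc
  obtain ⟨n, hn0, hn⟩ := h.mul_conj I hI
  obtain ⟨m, hm⟩ := h.nrm α
  have hmn : Ideal.span {((m : ℤ) : 𝓞 K)} = Ideal.span {(((n : ℤ) ^ 2 : ℤ) : 𝓞 K)} := by
    rw [← hm, ← Ideal.span_singleton_mul_span_singleton, ← map_span' (σ := σ), ← hα]
    push_cast
    rw [← Ideal.span_singleton_pow, ← hn, Ideal.map_pow, mul_pow]
  have hmn' : m = (n : ℤ) ^ 2 := by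
    apply Int.dvd_antisymm (h.nonneg hm) (by positivity)
    · exact h.dvd_int (Ideal.span_singleton_le_span_singleton.1 hmn.symm.le)
    · exact h.dvd_int (Ideal.span_singleton_le_span_singleton.1 hmn.le)
  by_cases hαn : α = -(n : 𝓞 K)
  · refine h.fixed_mem H hH _ I rfl hI ?_
    rw [hαn, Ideal.span_singleton_neg, ← hn, pow_two] at hα
    exact (mul_left_cancel₀ hI hα).symm
  · have hβ : α + n ≠ 0 := fun h0 => hαn (eq_neg_of_add_eq_zero_left h0)
    have hsβ : Ideal.span {σ (α + n)} ≠ ⊥ := by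
      rw [Ne, Ideal.span_singleton_eq_bot, map_eq_zero_iff σ σ.injective]
      exact hβ
    have hJ0 := mul_ne_zero hI hsβ
    have hcl : cl (I * Ideal.span {σ (α + n)}) = cl I := by
      rw [cl_mul hI hsβ, cl_span, mul_one]
    rw [← hcl]
    refine h.fixed_mem H hH _ _ rfl hJ0 ?_
    rw [Ideal.map_mul, map_span', h.inv]
    refine (mul_left_cancel₀ hI ?_)
    rw [← mul_assoc, ← mul_assoc, hn, ← pow_two, hα, Ideal.span_singleton_mul_span_singleton,
      Ideal.span_singleton_mul_span_singleton]
    congr 2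
    rw [hmn'] at hm
    push_cast at hm
    rw [map_add, map_natCast]
    linear_combination -hm

theorem ramified (h : QD σ s D) (M : Ideal (𝓞 K)) (hM : M.IsMaximal) (hM0 : M ≠ ⊥)
    (hf : M.map (σ : 𝓞 K →+* 𝓞 K) = M) (ω : 𝓞 K) (Δ : ℤ) (hω : (ω - σ ω) ^ 2 = Δ) :
    cl M = 1 ∨ ∃ l : ℕ, l.Prime ∧ (l : ℤ) ∣ Δ ∧ M ^ 2 = Ideal.span {(l : 𝓞 K)} := by
  obtain ⟨d, hd0, hd⟩ := h.mul_conj M hM0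
  rw [hf, ← pow_two] at hd
  have hd1 : d ≠ 1 := by
    rintro rfl
    rw [Nat.cast_one, Ideal.span_singleton_one] at hd
    exact hM.ne_top (top_le_iff.1 (hd.symm.le.trans (Ideal.pow_le_self two_ne_zero)))
  obtain ⟨l, hl, k, rfl⟩ := Nat.exists_prime_and_dvd hd1
  have hdvd : Ideal.span {(l : 𝓞 K)} ∣ M ^ 2 := by
    rw [hd, Nat.cast_mul, ← Ideal.span_singleton_mul_span_singleton]
    exact dvd_mul_right _ _
  obtain ⟨i, hi, hass⟩ := (dvd_prime_pow (Ideal.prime_of_isPrime hM0 hM.isPrime) 2).1 hdvd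
  rw [associated_iff_eq] at hass
  have hnl : Ideal.absNorm (Ideal.span {(l : 𝓞 K)}) = l ^ 2 := by
    have := h.absNorm_int l
    simpa using this
  interval_cases i
  · rw [hass, pow_zero, map_one] at hnl
    have := hl.one_lt
    nlinarith
  · left
    rw [pow_one] at hass
    rw [← hass, cl_span]
  · right
    refine ⟨l, hl, ?_, hass.symm⟩
    rw [hass, map_pow] at hnl
    have hnM : Ideal.absNorm M = l := Nat.pow_left_injective (n := 2) (by norm_num) hnl
    have hmem : ω - σ ω ∈ M := by
      have hcard : Nat.card (𝓞 K ⧸ M) = l := by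
        rw [← hnM, Ideal.absNorm_apply, Submodule.cardQuot_apply]
      haveI : Fact l.Prime := ⟨hl⟩
      have h1 : (Ideal.Quotient.mk M 1) ≠ 0 := by
        rw [Ne, Ideal.Quotient.eq_zero_iff_mem]
        exact fun h1 => hM.ne_top ((Ideal.eq_top_iff_one M).2 h1)
      have htop := zmultiples_eq_top_of_prime_card hcard h1
      have : Ideal.Quotient.mk M ω ∈ AddSubgroup.zmultiples (Ideal.Quotient.mk M 1) := by
        rw [htop]; trivial
      obtain ⟨k, hk⟩ := AddSubgroup.mem_zmultiples_iff.1 this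
      have h2 : ω - k ∈ M := by
        rw [← Ideal.Quotient.eq_zero_iff_mem, map_sub, ← hk]; simp
      have h3 : σ (ω - k) ∈ M := by
        rw [← hf]; exact Ideal.mem_map_of_mem (σ : 𝓞 K →+* 𝓞 K) h2
      have := M.sub_mem h2 h3
      rw [map_sub, map_intCast] at this
      convert this using 1
      ring
    have h4 := Ideal.pow_mem_pow hmem 2
    rw [hω, ← hass, Ideal.mem_span_singleton] at h4
    exact h.dvd_int (m := (l : ℤ)) (by simpa using h4)

theorem grp1 {G : Type*} [CommGroup G] [Finite G] (t : G) (h : ∀ c : G, c ^ 2 = 1 → c = 1 ∨ c = t)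
    (h4 : 4 ∣ Nat.card G) : ∃ c : G, c ^ 2 = t := by
  let f : G →* G := powMonoidHom 2
  have hc : Nat.card f.ker * Nat.card f.range = Nat.card G := by
    rw [← Subgroup.index_ker, Subgroup.card_mul_index]
  have hk : Nat.card f.ker ≤ 2 := by
    have hsub : (f.ker : Set G) ⊆ {1, t} := by
      intro c hc
      exact h c hc
    have := Set.ncard_le_ncard hsub (Set.toFinite _)
    refine this.trans ?_
    refine (Set.ncard_insert_le _ _).trans ?_
    rw [Set.ncard_singleton]
  have hk0 : 0 < Nat.card f.ker := Nat.card_pos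
  have h2 : 2 ∣ Nat.card f.range := by
    generalize Nat.card f.ker = k at *
    rw [← hc] at h4
    interval_cases k <;> omega
  haveI : Fact (Nat.Prime 2) := ⟨Nat.prime_two⟩
  obtain ⟨g, hg⟩ := exists_prime_orderOf_dvd_card' 2 h2
  obtain ⟨⟨g, x, hx⟩, hg⟩ : ∃ g : f.range, orderOf g = 2 := ⟨g, hg⟩
  have hg2 : orderOf g = 2 := by rw [← hg]; exact (Subgroup.orderOf_mk _ _).symm
  rcases h g (by rw [← hg2, pow_orderOf_eq_one]) with h1 | h1
  · rw [h1, orderOf_one] at hg2; omega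
  · exact ⟨x, by rw [← h1, ← hx]; rfl⟩

theorem grp2 {G : Type*} [CommGroup G] [Finite G] (t : G) (ht1 : t ≠ 1) (ht2 : t ^ 2 = 1)
    (h4 : ¬ 4 ∣ Nat.card G) : ∃ k : ℕ, ∀ c : G, c ^ (2 * k + 1) = 1 ∨ c ^ (2 * k + 1) = t := by
  have hord : orderOf t = 2 := orderOf_eq_prime ht2 ht1
  have hc := Subgroup.card_mul_index (Subgroup.zpowers t)
  rw [Nat.card_zpowers, hord] at hc
  have hodd : (Subgroup.zpowers t).index % 2 = 1 := by omega
  refine ⟨(Subgroup.zpowers t).index / 2, fun c => ?_⟩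
  have : 2 * ((Subgroup.zpowers t).index / 2) + 1 = (Subgroup.zpowers t).index := by omega
  rw [this]
  have hm := Subgroup.pow_index_mem (Subgroup.zpowers t) c
  rw [Subgroup.mem_zpowers_iff] at hm
  obtain ⟨j, hj⟩ := hm
  rw [← hj]
  rcases Int.even_or_odd' j with ⟨i, rfl | rfl⟩
  · left; rw [zpow_mul]; norm_cast; rw [ht2, one_zpow]
  · right; rw [zpow_add, zpow_mul]; norm_cast; rw [ht2, one_zpow, one_mul, pow_one]

theorem descent {p q : ℕ} (hq : q.Prime) (hq2 : q ≠ 2) (r : ℤ) (hr : ¬ (q : ℤ) ∣ r) :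
    ∀ (n : ℕ) (a b : ℤ), n ≠ 0 → a ^ 2 + q * r * b ^ 2 = 4 * (p * n ^ 2) →
      IsSquare (p : ZMod q) := by
  haveI : Fact q.Prime := ⟨hq⟩
  have hqi : Prime (q : ℤ) := Nat.prime_iff_prime_int.1 hq
  intro n
  induction n using Nat.strong_induction_on with
  | _ n ih =>
  intro a b hn hab
  by_cases hqn : q ∣ n
  · obtain ⟨n', rfl⟩ := hqn
    push_cast at hab
    have h1 : (q : ℤ) ∣ a := by
      apply hqi.dvd_of_dvd_pow (n := 2)
      exact ⟨4 * p * q * n' ^ 2 - r * b ^ 2, by linear_combination hab⟩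
    obtain ⟨a', rfl⟩ := h1
    have hq0 : (q : ℤ) ≠ 0 := hqi.ne_zero
    have h2 : (q : ℤ) ∣ b := by
      apply hqi.dvd_of_dvd_pow (n := 2)
      refine (hqi.dvd_or_dvd (a := r) ?_).resolve_left hr
      refine ⟨4 * p * n' ^ 2 - a' ^ 2, ?_⟩
      apply mul_left_cancel₀ hq0
      linear_combination hab
    obtain ⟨b', rfl⟩ := h2
    have hn' : n' ≠ 0 := by rintro rfl; simp at hn
    refine ih n' ?_ a' b' hn' ?_
    · have := hq.two_le
      have : 0 < n' := Nat.pos_of_ne_zero hn'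
      nlinarith
    · apply mul_left_cancel₀ (pow_ne_zero 2 hq0)
      linear_combination hab
  · have h1 := congrArg (Int.cast : ℤ → ZMod q) hab
    push_cast at h1
    rw [ZMod.natCast_self, zero_mul, zero_mul, add_zero] at h1
    have hn0 : (n : ZMod q) ≠ 0 := fun h0 => hqn ((ZMod.natCast_eq_zero_iff n q).1 h0)
    have h20 : (2 : ZMod q) ≠ 0 := by
      have : ((2 : ℕ) : ZMod q) ≠ 0 := fun h0 =>
        hq2 ((Nat.prime_dvd_prime_iff_eq hq Nat.prime_two).1 ((ZMod.natCast_eq_zero_iff 2 q).1 h0))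
      exact_mod_cast this
    refine ⟨a / (2 * n), ?_⟩
    field_simp
    linear_combination -h1

theorem cl_P_sq {p : ℕ} {P : Ideal (𝓞 K)} (hP0 : P ≠ ⊥) (hP : P ^ 2 = Ideal.span {(p : 𝓞 K)}) :
    cl P ^ 2 = 1 := by rw [← cl_pow hP0, hP, cl_span]

theorem absNorm_P (h : QD σ s D) {p : ℕ} {P : Ideal (𝓞 K)} (hP : P ^ 2 = Ideal.span {(p : 𝓞 K)}) :
    Ideal.absNorm P = p := by
  have h1 := h.absNorm_int p
  rw [Int.cast_natCast, ← hP, map_pow, Int.natAbs_natCast] at h1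
  exact Nat.pow_left_injective (n := 2) (by norm_num) h1

theorem main1 (h : QD σ s D) {p q : ℕ} (hp : p.Prime) (hq : q.Prime) (hpq : p ≠ q)
    (hq4 : q % 4 = 1) {P : Ideal (𝓞 K)} (hP0 : P ≠ ⊥) (hP : P ^ 2 = Ideal.span {(p : 𝓞 K)})
    (hD : (p = 2 ∧ D = -(q : ℤ)) ∨ D = -(p * q : ℤ)) {ω : 𝓞 K} {Δ : ℤ}
    (hω : (ω - σ ω) ^ 2 = Δ) (hΔ : ∀ l : ℕ, l.Prime → (l : ℤ) ∣ Δ → l = p ∨ l = q)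
    (h4 : 4 ∣ Nat.card (ClassGroup (𝓞 K))) : IsSquare (p : ZMod q) := by
  have hs0 : Ideal.span {s} ≠ ⊥ := by
    rw [Ne, Ideal.span_singleton_eq_bot]
    rintro rfl
    have h1 := h.sq
    have h2 := h.neg
    rw [zero_pow two_ne_zero] at h1
    have : D = 0 := by exact_mod_cast h1.symm
    omega
  have ht : ∀ c : ClassGroup (𝓞 K), c ^ 2 = 1 → c = 1 ∨ c = cl P := by
    intro c hc
    have := h.torsion_mem (Subgroup.zpowers (cl P)) ?_ c hc
    · obtain ⟨j, hj⟩ := Subgroup.mem_zpowers_iff.1 this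
      rw [← hj]
      have ht2 := cl_P_sq hP0 hP
      rcases Int.even_or_odd' j with ⟨i, rfl | rfl⟩
      · left; rw [zpow_mul]; norm_cast; rw [ht2, one_zpow]
      · right; rw [zpow_add, zpow_mul]; norm_cast; rw [ht2, one_zpow, one_mul, pow_one]
    · intro M hM hM0 hf
      rcases h.ramified M hM hM0 hf ω Δ hω with h1 | ⟨l, hl, hlΔ, hMl⟩
      · rw [h1]; exact Subgroup.one_mem _
      rcases hΔ l hl hlΔ with rfl | rfl
      · rw [← hP] at hMl
        rw [(pow_left_inj two_ne_zero).1 hMl]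
        exact Subgroup.mem_zpowers _
      · rcases hD with ⟨-, hD⟩ | hD
        · have : M ^ 2 = (Ideal.span {s}) ^ 2 := by
            rw [hMl, Ideal.span_singleton_pow, h.sq, hD, Int.cast_neg, Ideal.span_singleton_neg,
              Int.cast_natCast]
          rw [(pow_left_inj two_ne_zero).1 this, cl_span]; exact Subgroup.one_mem _
        · have : (P * M) ^ 2 = (Ideal.span {s}) ^ 2 := by
            rw [mul_pow, hMl, hP, Ideal.span_singleton_pow, h.sq, hD, Int.cast_neg,
              Ideal.span_singleton_neg, Ideal.span_singleton_mul_span_singleton]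
            push_cast; rfl
          have h2 := congrArg cl ((pow_left_inj two_ne_zero).1 this)
          rw [cl_span, cl_mul hP0 hM0] at h2
          rw [← inv_eq_of_mul_eq_one_right h2]
          exact Subgroup.inv_mem _ (Subgroup.mem_zpowers _)
  obtain ⟨c, hc⟩ := grp1 (cl P) ht h4
  obtain ⟨J, hJ0, hJ⟩ := cl_surj c⁻¹
  have h1 : cl (P * J ^ 2) = 1 := by
    rw [cl_mul hP0 (pow_ne_zero 2 hJ0), cl_pow hJ0, hJ, ← hc, inv_pow, mul_inv_cancel]
  obtain ⟨x, -, hx⟩ := cl_one (mul_ne_zero hP0 (pow_ne_zero 2 hJ0)) h1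
  obtain ⟨a, b, hab⟩ := h.form' x
  rw [← hx, map_mul, map_pow, h.absNorm_P hP] at hab
  have hq2 : q ≠ 2 := by omega
  have hJn : Ideal.absNorm J ≠ 0 := fun h0 => hJ0 (Ideal.absNorm_eq_zero_iff.1 h0)
  push_cast at hab
  rcases hD with ⟨-, hD⟩ | hD
  · refine descent hq hq2 1 ?_ (Ideal.absNorm J) a b hJn (by rw [← hab, hD]; ring)
    intro h1
    have := Int.le_of_dvd one_pos h1
    have := hq.two_le
    omega
  · refine descent hq hq2 p ?_ (Ideal.absNorm J) a b hJn (by rw [← hab, hD]; ring)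
    intro h1
    exact hpq ((Nat.prime_dvd_prime_iff_eq hq hp).1 (by exact_mod_cast h1)).symm

theorem main2 (h : QD σ s D) {p q : ℕ} (hp : p.Prime) (hq : q.Prime) (hpq : p ≠ q)
    (hq4 : q % 4 = 1) {P : Ideal (𝓞 K)} (hP0 : P ≠ ⊥) (hP : P ^ 2 = Ideal.span {(p : 𝓞 K)})
    (hD : (p = 2 ∧ D = -(q : ℤ)) ∨ D = -(p * q : ℤ)) {l : ℕ}
    (hlsq : ¬ IsSquare (l : ZMod q)) {I : Ideal (𝓞 K)} (hI0 : I ≠ ⊥) (hI : Ideal.absNorm I = l)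
    (hsq : IsSquare (p : ZMod q)) : 4 ∣ Nat.card (ClassGroup (𝓞 K)) := by
  haveI : Fact q.Prime := ⟨hq⟩
  have hq5 : 5 ≤ q := by
    have := hq.two_le
    omega
  by_contra h4
  have ht1 : cl P ≠ 1 := by
    intro h1
    obtain ⟨x, -, hx⟩ := cl_one hP0 h1
    obtain ⟨a, b, hab⟩ := h.form' x
    rw [← hx, h.absNorm_P hP] at hab
    have hp0 : 0 < p := hp.pos
    have key : ∀ a : ℤ, a ^ 2 ≠ 4 * p := by
      intro a ha
      have h2 : (2 : ℤ) ∣ a := by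
        apply Int.prime_two.dvd_of_dvd_pow (n := 2)
        exact ⟨2 * p, by linear_combination ha⟩
      obtain ⟨c, rfl⟩ := h2
      have hc : (p : ℤ) = c * c := by linarith
      have hpi : Prime (p : ℤ) := Nat.prime_iff_prime_int.1 hp
      exact hpi.irreducible.not_isSquare ⟨c, hc⟩
    rcases hD with ⟨rfl, rfl⟩ | rfl
    · have hb : b ^ 2 < 2 := by
        push_cast at hab
        have : (5 : ℤ) ≤ q := by exact_mod_cast hq5
        nlinarith [sq_nonneg a, sq_nonneg b]
      have hb1 : -2 < b := by nlinarith
      have hb2 : b < 2 := by nlinarith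
      have ha1 : a ^ 2 ≤ 8 := by push_cast at hab; nlinarith [sq_nonneg b]
      have ha2 : -3 < a := by nlinarith
      have ha3 : a < 3 := by nlinarith
      push_cast at hab
      interval_cases b <;> interval_cases a <;> omega
    · have hb : b = 0 := by
        by_contra hb
        have : 1 ≤ b ^ 2 := by
          have := sq_pos_of_ne_zero hb
          omega
        have h5 : (5 : ℤ) ≤ q := by exact_mod_cast hq5
        have hp0 : (0 : ℤ) < p := by exact_mod_cast hp0
        have : (p : ℤ) * 5 ≤ p * q * b ^ 2 := by
          calc (p : ℤ) * 5 ≤ p * q := by gcongr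
            _ = p * q * 1 := by ring
            _ ≤ p * q * b ^ 2 := by gcongr
        nlinarith [sq_nonneg a]
      rw [hb] at hab
      exact key a (by linear_combination hab)
  obtain ⟨k, hk⟩ := grp2 (cl P) ht1 (cl_P_sq hP0 hP) h4
  have hDq : (D : ZMod q) = 0 := by
    rcases hD with ⟨-, rfl⟩ | rfl <;> simp
  have h20 : (2 : ZMod q) ≠ 0 := by
    have : ((2 : ℕ) : ZMod q) ≠ 0 := fun h0 => by
      have := (Nat.prime_dvd_prime_iff_eq hq Nat.prime_two).1 ((ZMod.natCast_eq_zero_iff 2 q).1 h0)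
      omega
    exact_mod_cast this
  have hl0 : (l : ZMod q) ≠ 0 := fun h0 => hlsq (by rw [h0]; exact IsSquare.zero)
  have fin : ∀ (x : 𝓞 K) (w : ZMod q), w ≠ 0 →
      ((Ideal.absNorm (Ideal.span {x}) : ℕ) : ZMod q) = l ^ (2 * k + 1) * w ^ 2 → False := by
    intro x w hw hx
    obtain ⟨a, b, hab⟩ := h.form' x
    have h1 := congrArg (Int.cast : ℤ → ZMod q) hab
    push_cast at h1
    rw [hDq, zero_mul, sub_zero, hx] at h1
    apply hlsq
    refine ⟨a / (2 * l ^ k * w), ?_⟩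
    field_simp
    rw [h1]; ring
  rcases hk (cl I) with h1 | h1
  · rw [← cl_pow hI0] at h1
    obtain ⟨x, -, hx⟩ := cl_one (pow_ne_zero _ hI0) h1
    refine fin x 1 one_ne_zero ?_
    rw [← hx, map_pow, hI]; push_cast; ring
  · have h2 : cl (I ^ (2 * k + 1) * P) = 1 := by
      rw [cl_mul (pow_ne_zero _ hI0) hP0, cl_pow hI0, h1, ← pow_two, cl_P_sq hP0 hP]
    obtain ⟨x, -, hx⟩ := cl_one (mul_ne_zero (pow_ne_zero _ hI0) hP0) h2
    obtain ⟨w, hw⟩ := hsq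
    refine fin x w ?_ ?_
    · rintro rfl
      rw [mul_zero, ZMod.natCast_eq_zero_iff] at hw
      exact hpq ((Nat.prime_dvd_prime_iff_eq hq hp).1 hw).symm
    · rw [← hx, map_mul, map_pow, hI, h.absNorm_P hP]; push_cast; rw [hw]; ring

theorem splitPrime (h : QD σ s D) {l : ℕ} (hl : l.Prime) (y : ℤ) (hy : (l : ℤ) ∣ y ^ 2 - D)
    (hy2 : ¬ (l : ℤ) ∣ 2 * y) : ∃ I : Ideal (𝓞 K), I ≠ ⊥ ∧ Ideal.absNorm I = l := by
  obtain ⟨r, hr⟩ := hy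
  obtain ⟨u, v, huv⟩ : IsCoprime (l : ℤ) (2 * y) :=
    ((Nat.prime_iff_prime_int.1 hl).irreducible.coprime_iff_not_dvd).2 hy2
  have hsq : (y - s) * (y + s) = (l : 𝓞 K) * r := by
    have : ((y ^ 2 - D : ℤ) : 𝓞 K) = ((l * r : ℤ) : 𝓞 K) := by rw [hr]
    push_cast at this
    rw [← h.sq] at this
    linear_combination this
  have hmap : (Ideal.span {(l : 𝓞 K), (y : 𝓞 K) - s}).map (σ : 𝓞 K →+* 𝓞 K) =
      Ideal.span {(l : 𝓞 K), (y : 𝓞 K) + s} := by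
    rw [Ideal.map_span, Set.image_pair]
    simp [h.conj]
  have hprod : Ideal.span {(l : 𝓞 K), (y : 𝓞 K) - s} * Ideal.span {(l : 𝓞 K), (y : 𝓞 K) + s} =
      Ideal.span {(l : 𝓞 K)} := by
    apply le_antisymm
    · rw [Ideal.span_pair_mul_span_pair, Ideal.span_le]
      rintro z (rfl | rfl | rfl | rfl) <;> rw [SetLike.mem_coe, Ideal.mem_span_singleton]
      · exact dvd_mul_right _ _
      · exact dvd_mul_right _ _
      · exact dvd_mul_left _ _
      · rw [hsq]; exact dvd_mul_right _ _
    · rw [Ideal.span_singleton_le_iff_mem]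
      have huv' : (u : 𝓞 K) * l + v * (2 * y) = 1 := by exact_mod_cast congrArg (Int.cast : ℤ → 𝓞 K) huv
      have : (l : 𝓞 K) = u * (l * l) + v * (l * (y + s)) + v * ((y - s) * l) := by
        linear_combination -(l : 𝓞 K) * huv'
      have m1 : (l : 𝓞 K) ∈ Ideal.span {(l : 𝓞 K), (y : 𝓞 K) - s} := Ideal.subset_span (by simp)
      have m2 : (y : 𝓞 K) - s ∈ Ideal.span {(l : 𝓞 K), (y : 𝓞 K) - s} :=
        Ideal.subset_span (by simp)
      have m3 : (l : 𝓞 K) ∈ Ideal.span {(l : 𝓞 K), (y : 𝓞 K) + s} := Ideal.subset_span (by simp)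
      have m4 : (y : 𝓞 K) + s ∈ Ideal.span {(l : 𝓞 K), (y : 𝓞 K) + s} :=
        Ideal.subset_span (by simp)
      refine Set.mem_of_eq_of_mem this ?_
      exact Ideal.add_mem _ (Ideal.add_mem _
        (Ideal.mul_mem_left _ _ (Ideal.mul_mem_mul m1 m3))
        (Ideal.mul_mem_left _ _ (Ideal.mul_mem_mul m1 m4)))
        (Ideal.mul_mem_left _ _ (Ideal.mul_mem_mul m2 m3))
  have hn := h.absNorm_map (Ideal.span {(l : 𝓞 K), (y : 𝓞 K) - s})
  rw [hmap] at hn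
  have hN := h.absNorm_int l
  rw [Int.cast_natCast, ← hprod, map_mul, hn, ← pow_two, Int.natAbs_natCast] at hN
  refine ⟨Ideal.span {(l : 𝓞 K), (y : 𝓞 K) - s}, ?_, Nat.pow_left_injective (n := 2) (by norm_num) hN⟩
  intro h0
  rw [h0] at hN
  simp at hN
  exact hl.ne_zero (pow_eq_zero_iff two_ne_zero |>.1 hN.symm)

theorem exP {p : ℕ} (hp : p.Prime) {z e u v w : 𝓞 K} (hz : z ^ 2 = p * e)
    (hu : (p : 𝓞 K) = u * (p * p) + v * (p * z) + w * (z * z)) :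
    ∃ P : Ideal (𝓞 K), P ≠ ⊥ ∧ P ^ 2 = Ideal.span {(p : 𝓞 K)} := by
  refine ⟨Ideal.span {(p : 𝓞 K), z}, ?_, ?_⟩
  · intro h0
    have m1 : (p : 𝓞 K) ∈ Ideal.span {(p : 𝓞 K), z} := Ideal.subset_span (by simp)
    rw [h0, Ideal.mem_bot, Nat.cast_eq_zero] at m1
    exact hp.ne_zero m1
  · rw [pow_two]
    apply le_antisymm
    · rw [Ideal.span_pair_mul_span_pair, Ideal.span_le]
      rintro y (rfl | rfl | rfl | rfl) <;> rw [SetLike.mem_coe, Ideal.mem_span_singleton]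
      · exact dvd_mul_right _ _
      · exact dvd_mul_right _ _
      · exact dvd_mul_left _ _
      · rw [← pow_two, hz]; exact dvd_mul_right _ _
    · rw [Ideal.span_singleton_le_iff_mem]
      have m1 : (p : 𝓞 K) ∈ Ideal.span {(p : 𝓞 K), z} := Ideal.subset_span (by simp)
      have m2 : z ∈ Ideal.span {(p : 𝓞 K), z} := Ideal.subset_span (by simp)
      refine Set.mem_of_eq_of_mem hu ?_
      exact Ideal.add_mem _ (Ideal.add_mem _
        (Ideal.mul_mem_left _ _ (Ideal.mul_mem_mul m1 m1))
        (Ideal.mul_mem_left _ _ (Ideal.mul_mem_mul m1 m2)))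
        (Ideal.mul_mem_left _ _ (Ideal.mul_mem_mul m2 m2))

theorem exP1 (h : QD σ s D) {q : ℕ} (hq4 : q % 4 = 1) (hD : D = -(q : ℤ)) :
    ∃ P : Ideal (𝓞 K), P ≠ ⊥ ∧ P ^ 2 = Ideal.span {((2 : ℕ) : 𝓞 K)} := by
  obtain ⟨k, hk⟩ : ∃ k, q = 4 * k + 1 := ⟨q / 4, by omega⟩
  have hs := h.sq
  rw [hD, hk] at hs
  push_cast at hs
  refine exP Nat.prime_two (z := 1 - s) (e := -2 * k - s) (u := -k) (v := 1) (w := -1) ?_ ?_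
  · push_cast; linear_combination hs
  · push_cast; linear_combination hs

theorem exP2 (h : QD σ s D) {p q : ℕ} (hp : p.Prime) (hq : q.Prime) (hpq : p ≠ q)
    (hD : D = -(p * q : ℤ)) :
    ∃ P : Ideal (𝓞 K), P ≠ ⊥ ∧ P ^ 2 = Ideal.span {(p : 𝓞 K)} := by
  obtain ⟨u, v, huv⟩ : IsCoprime (p : ℤ) (q : ℤ) :=
    Nat.isCoprime_iff_coprime.2 ((Nat.coprime_primes hp hq).2 hpq)
  have huv' : (u : 𝓞 K) * p + v * q = 1 := by exact_mod_cast congrArg (Int.cast : ℤ → 𝓞 K) huv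
  have hs := h.sq
  rw [hD] at hs
  push_cast at hs
  refine exP hp (z := s) (e := -q) (u := u) (v := 0) (w := -v) ?_ ?_
  · linear_combination hs
  · linear_combination -(p : 𝓞 K) * huv' + v * hs
end QD

theorem exQD {K : Type*} [Field K] [NumberField K] (fr : Module.finrank ℚ K = 2) {D : ℤ}
    (hD : D < 0) (hsf : Squarefree D) (x : K) (hx : x ^ 2 = D) :
    ∃ (σ : 𝓞 K ≃+* 𝓞 K) (s : 𝓞 K), QD σ s D := by
  haveI : Algebra.IsQuadraticExtension ℚ K := { finrank_eq_two' := fr }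
  have hcard := IsGalois.card_aut_eq_finrank ℚ K
  rw [fr] at hcard
  obtain ⟨τ, hτ1, hτ⟩ := (Nat.card_eq_two_iff' (1 : Gal(K/ℚ))).1 hcard
  have hfix : ∀ y : K, τ y = y → ∃ r : ℚ, algebraMap ℚ K r = y := by
    intro y hy
    refine (IsGalois.mem_range_algebraMap_iff_fixed (F := ℚ) y).2 fun f => ?_
    by_cases hf : f = 1
    · rw [hf]; rfl
    · rw [hτ f hf]; exact hy
  have hττ : ∀ y, τ (τ y) = y := by
    intro y
    have : τ ^ 2 = 1 := by rw [← hcard]; exact pow_card_eq_one'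
    rw [pow_two] at this
    exact DFunLike.congr_fun this y
  have hτx : τ x = -x := by
    have h1 : (τ x) ^ 2 = x ^ 2 := by rw [← map_pow, hx, map_intCast]
    rcases sq_eq_sq_iff_eq_or_eq_neg.1 h1 with h2 | h2
    · exfalso
      obtain ⟨r, hr⟩ := hfix x h2
      have h3 : r ^ 2 = D := by
        apply (algebraMap ℚ K).injective
        rw [map_pow, hr, hx, map_intCast]
      have : (D : ℚ) < 0 := by exact_mod_cast hD
      nlinarith [sq_nonneg r]
    · exact h2
  have hxi : IsIntegral ℤ x := by
    refine ⟨Polynomial.X ^ 2 - Polynomial.C D, by monicity!, ?_⟩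
    rw [Polynomial.eval₂_sub, Polynomial.eval₂_pow, Polynomial.eval₂_X, Polynomial.eval₂_C, hx,
      eq_intCast, sub_self]
  let s : 𝓞 K := ⟨x, hxi⟩
  let σ : 𝓞 K ≃+* 𝓞 K := RingOfIntegers.mapRingEquiv (τ : K ≃+* K)
  have hσ : ∀ y : 𝓞 K, ((σ y : 𝓞 K) : K) = τ y := fun y => rfl
  have hs : (s : K) = x := rfl
  have hss : s ^ 2 = (D : 𝓞 K) := by
    apply RingOfIntegers.coe_injective
    rw [map_pow, map_intCast]; exact hx
  have hσs : σ s = -s := by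
    apply RingOfIntegers.coe_injective
    rw [map_neg]; exact hτx
  have hinv : ∀ y, σ (σ y) = y := fun y => by
    apply RingOfIntegers.coe_injective
    exact hττ _
  have hfixi : ∀ y : 𝓞 K, σ y = y → ∃ n : ℤ, y = n := by
    intro y hy
    obtain ⟨r, hr⟩ := hfix y (by rw [← hσ, hy])
    have hri : IsIntegral ℤ r := by
      have : IsIntegral ℤ (y : K) := y.isIntegral_coe
      rw [← hr] at this
      exact (isIntegral_algebraMap_iff (algebraMap ℚ K).injective).1 this
    obtain ⟨n, hn⟩ := IsIntegrallyClosed.isIntegral_iff.1 hri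
    refine ⟨n, ?_⟩
    apply RingOfIntegers.coe_injective
    rw [map_intCast]
    change (y : K) = _
    rw [← hr, ← hn]; simp
  have hs0 : s ≠ 0 := by
    intro h0
    rw [h0, zero_pow two_ne_zero] at hss
    have : D = 0 := by exact_mod_cast hss.symm
    omega
  refine ⟨σ, s, fr, hinv, hss, hσs, hD, ?_, ?_⟩
  · intro y
    obtain ⟨a, ha⟩ := hfixi (y + σ y) (by rw [map_add, hinv, add_comm])
    obtain ⟨m, hm⟩ := hfixi ((y - σ y) * s) (by rw [map_mul, map_sub, hinv, hσs]; ring)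
    obtain ⟨n, hn⟩ := hfixi ((y - σ y) ^ 2) (by rw [map_pow, map_sub, hinv]; ring)
    have h1 : ((m ^ 2 : ℤ) : 𝓞 K) = ((D * n : ℤ) : 𝓞 K) := by
      push_cast
      rw [← hm, ← hn, ← hss]; ring
    have h2 : m ^ 2 = D * n := by exact_mod_cast h1
    obtain ⟨b, hb⟩ := hsf.isRadical 2 m ⟨n, h2⟩
    refine ⟨a, b, ?_⟩
    have h3 : y - σ y = b * s := by
      apply mul_right_cancel₀ hs0
      rw [hm, hb]
      push_cast
      rw [← hss]; ring
    linear_combination ha + h3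
  · intro y
    exact hfixi _ (by rw [map_mul, hinv, mul_comm])

theorem coprimeP {p q : ℕ} (hp : p.Prime) (hq : q.Prime) (h : p ≠ q) : Nat.Coprime p q :=
  (Nat.coprime_primes hp hq).2 h

theorem exNonsq {q : ℕ} (hq : q.Prime) (hq2 : q ≠ 2) : ∃ a : ℕ, ¬ IsSquare (a : ZMod q) := by
  haveI : Fact q.Prime := ⟨hq⟩
  obtain ⟨a, ha⟩ := FiniteField.exists_nonsquare (F := ZMod q) (by rwa [ZMod.ringChar_zmod_n])
  exact ⟨a.val, by rwa [ZMod.natCast_zmod_val]⟩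

theorem nonsq_coprime {q : ℕ} (hq : q.Prime) {a : ℕ} (ha : ¬ IsSquare (a : ZMod q)) :
    Nat.Coprime a q := by
  rw [Nat.coprime_comm, hq.coprime_iff_not_dvd]
  intro h
  rw [(ZMod.natCast_eq_zero_iff a q).2 h] at ha
  exact ha IsSquare.zero

theorem exCRT {q : ℕ} (hq : q.Prime) (hq2 : q ≠ 2) {N c : ℕ} (hN : Nat.Coprime N q)
    (hc : Nat.Coprime c N) :
    ∃ k : ℕ, k.Coprime (N * q) ∧ k ≡ c [MOD N] ∧ ¬ IsSquare (k : ZMod q) := by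
  obtain ⟨a, ha⟩ := exNonsq hq hq2
  obtain ⟨k, hk1, hk2⟩ := Nat.chineseRemainder hN c a
  have hka : (k : ZMod q) = a := (ZMod.natCast_eq_natCast_iff k a q).2 hk2
  have hns : ¬ IsSquare (k : ZMod q) := by rwa [hka]
  refine ⟨k, Nat.Coprime.mul_right ?_ (nonsq_coprime hq hns), hk1, hns⟩
  rw [Nat.Coprime, hk1.gcd_eq]; exact hc

theorem exPrime {q : ℕ} (hq : q.Prime) (hq2 : q ≠ 2) {N c : ℕ} (hN0 : N ≠ 0) (hN : Nat.Coprime N q)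
    (hc : Nat.Coprime c N) (B : ℕ) :
    ∃ l > B, l.Prime ∧ l ≡ c [MOD N] ∧ ¬ IsSquare (l : ZMod q) := by
  obtain ⟨k, hk, hkc, hns⟩ := exCRT hq hq2 hN hc
  obtain ⟨l, hlB, hl, hlk⟩ := Nat.forall_exists_prime_gt_and_modEq B
    (mul_ne_zero hN0 hq.ne_zero) hk
  refine ⟨l, hlB, hl, (hlk.of_mul_right q).trans hkc, ?_⟩
  rwa [(ZMod.natCast_eq_natCast_iff l k q).2 (hlk.of_mul_left N)]

theorem nonsq_mul {l : ℕ} (hl : l.Prime) {a b : ZMod l} (ha : ¬ IsSquare a) (hb : ¬ IsSquare b) :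
    IsSquare (a * b) := by
  haveI : Fact l.Prime := ⟨hl⟩
  have ha0 : a ≠ 0 := by rintro rfl; exact ha IsSquare.zero
  have hb0 : b ≠ 0 := by rintro rfl; exact hb IsSquare.zero
  rw [← quadraticChar_one_iff_isSquare (mul_ne_zero ha0 hb0), map_mul,
    quadraticChar_neg_one_iff_not_isSquare.2 ha, quadraticChar_neg_one_iff_not_isSquare.2 hb]
  norm_num

theorem exY {l : ℕ} (hl : l.Prime) (hl2 : l ≠ 2) {D : ℤ} (hlD : ¬ (l : ℤ) ∣ D)
    (hsq : IsSquare (D : ZMod l)) : ∃ y : ℤ, (l : ℤ) ∣ y ^ 2 - D ∧ ¬ (l : ℤ) ∣ 2 * y := by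
  obtain ⟨w, hw⟩ := hsq
  obtain ⟨y, rfl⟩ := ZMod.intCast_surjective w
  have h1 : (l : ℤ) ∣ y ^ 2 - D := by
    rw [← ZMod.intCast_zmod_eq_zero_iff_dvd]
    push_cast
    rw [hw]; ring
  refine ⟨y, h1, fun h2 => ?_⟩
  have hli : Prime (l : ℤ) := Nat.prime_iff_prime_int.1 hl
  rcases hli.dvd_or_dvd h2 with h3 | h3
  · exact hl2 ((Nat.prime_dvd_prime_iff_eq hl Nat.prime_two).1 (by exact_mod_cast h3))
  · apply hlD
    have := dvd_sub (Dvd.dvd.pow h3 two_ne_zero) h1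
    simpa using this

/-- good auxiliary prime, case `D = -q` -/
theorem exL1 {q : ℕ} (hq : q.Prime) (hq4 : q % 4 = 1) :
    ∃ l : ℕ, l.Prime ∧ ¬ IsSquare (l : ZMod q) ∧
      ∃ y : ℤ, (l : ℤ) ∣ y ^ 2 - (-(q : ℤ)) ∧ ¬ (l : ℤ) ∣ 2 * y := by
  have hq2 : q ≠ 2 := by omega
  haveI : Fact q.Prime := ⟨hq⟩
  have hc : Nat.Coprime 4 q := Nat.Coprime.pow_left 2 (coprimeP Nat.prime_two hq hq2.symm)
  obtain ⟨l, hlB, hl, hl4, hns⟩ := exPrime hq hq2 (N := 4) (c := 3) (by norm_num) hc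
    (by norm_num) (q + 2)
  haveI : Fact l.Prime := ⟨hl⟩
  have hl4' : l % 4 = 3 := hl4
  refine ⟨l, hl, hns, exY hl (by omega) ?_ ?_⟩
  · intro h1
    rw [Int.dvd_neg] at h1
    have := Nat.le_of_dvd hq.pos (by exact_mod_cast h1)
    omega
  · push_cast
    rw [← neg_one_mul]
    apply nonsq_mul hl
    · rw [ZMod.exists_sq_eq_neg_one_iff]; omega
    · rwa [← ZMod.exists_sq_eq_prime_iff_of_mod_four_eq_one hq4 (by omega)]

theorem exL2_aux {p q l : ℕ} (hp : p.Prime) (hq : q.Prime) (hq4 : q % 4 = 1) (hl : l.Prime)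
    (hlB : p * q + 2 < l) (hl4 : l % 4 = 1) (hns : ¬ IsSquare (l : ZMod q))
    (hnp : ¬ IsSquare (p : ZMod l)) :
    ∃ y : ℤ, (l : ℤ) ∣ y ^ 2 - (-(p * q : ℤ)) ∧ ¬ (l : ℤ) ∣ 2 * y := by
  haveI : Fact q.Prime := ⟨hq⟩
  haveI : Fact l.Prime := ⟨hl⟩
  refine exY hl (by omega) ?_ ?_
  · intro h1
    rw [Int.dvd_neg] at h1
    have := Nat.le_of_dvd (mul_pos hp.pos hq.pos) (by exact_mod_cast h1)
    omega
  · push_cast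
    rw [← neg_one_mul]
    apply IsSquare.mul
    · rw [ZMod.exists_sq_eq_neg_one_iff]; omega
    · apply nonsq_mul hl hnp
      rwa [← ZMod.exists_sq_eq_prime_iff_of_mod_four_eq_one hq4 (by omega)]

theorem exL2 {p q : ℕ} (hp : p.Prime) (hq : q.Prime) (hq4 : q % 4 = 1) (hpq : p ≠ q) :
    ∃ l : ℕ, l.Prime ∧ ¬ IsSquare (l : ZMod q) ∧
      ∃ y : ℤ, (l : ℤ) ∣ y ^ 2 - (-(p * q : ℤ)) ∧ ¬ (l : ℤ) ∣ 2 * y := by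
  have hq2 : q ≠ 2 := by omega
  by_cases hp2 : p = 2
  · have hc : Nat.Coprime 8 q := Nat.Coprime.pow_left 3 (coprimeP Nat.prime_two hq hq2.symm)
    obtain ⟨l, hlB, hl, hl8, hns⟩ := exPrime hq hq2 (N := 8) (c := 5) (by norm_num) hc
      (by norm_num) (p * q + 2)
    have hl8' : l % 8 = 5 := hl8
    haveI : Fact l.Prime := ⟨hl⟩
    refine ⟨l, hl, hns, exL2_aux hp hq hq4 hl hlB (by omega) hns ?_⟩
    rw [hp2, Nat.cast_ofNat, ZMod.exists_sq_eq_two_iff (by omega)]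
    omega
  · obtain ⟨c, hc, hc4, hcp⟩ := exCRT hp hp2 (N := 4) (c := 1)
      (Nat.Coprime.pow_left 2 (coprimeP Nat.prime_two hp (Ne.symm hp2))) (by norm_num)
    obtain ⟨l, hlB, hl, hlc, hns⟩ := exPrime hq hq2 (N := 4 * p) (c := c)
      (mul_ne_zero (by norm_num) hp.ne_zero)
      (Nat.Coprime.mul_left (Nat.Coprime.pow_left 2 (coprimeP Nat.prime_two hq hq2.symm))
        (coprimeP hp hq hpq)) hc (p * q + 2)
    have hl4 : l % 4 = 1 := (hlc.of_mul_right p).trans hc4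
    haveI : Fact l.Prime := ⟨hl⟩
    haveI : Fact p.Prime := ⟨hp⟩
    refine ⟨l, hl, hns, exL2_aux hp hq hq4 hl hlB hl4 hns ?_⟩
    rw [ZMod.exists_sq_eq_prime_iff_of_mod_four_eq_one hl4 hp2]
    rwa [(ZMod.natCast_eq_natCast_iff l c p).2 (hlc.of_mul_left 4)]

theorem criterion {K : Type*} [Field K] [NumberField K] (fr : Module.finrank ℚ K = 2)
    {p q : ℕ} (hp : p.Prime) (hq : q.Prime) (hpq : p ≠ q) (hq4 : q % 4 = 1) {D : ℤ}
    (hD : (p = 2 ∧ D = -(q : ℤ)) ∨ D = -(p * q : ℤ)) (hp4 : p = 2 ∨ p % 4 = 3)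
    (x : K) (hx : x ^ 2 = D) :
    4 ∣ Nat.card (ClassGroup (𝓞 K)) ↔ IsSquare (p : ZMod q) := by
  have hDneg : D < 0 := by
    have := hp.pos
    have := hq.pos
    rcases hD with ⟨-, rfl⟩ | rfl
    · omega
    · have : 0 < (p * q : ℤ) := by positivity
      omega
  have hsf : Squarefree D := by
    rw [← Int.squarefree_natAbs]
    rcases hD with ⟨-, rfl⟩ | rfl
    · simpa using hq.squarefree
    · rw [Int.natAbs_neg, Int.natAbs_mul, Int.natAbs_natCast, Int.natAbs_natCast,
        Nat.squarefree_mul (coprimeP hp hq hpq)]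
      exact ⟨hp.squarefree, hq.squarefree⟩
  obtain ⟨σ, s, h⟩ := exQD fr hDneg hsf x hx
  obtain ⟨P, hP0, hP⟩ : ∃ P : Ideal (𝓞 K), P ≠ ⊥ ∧ P ^ 2 = Ideal.span {(p : 𝓞 K)} := by
    rcases hD with ⟨rfl, hD⟩ | hD
    · exact h.exP1 hq4 hD
    · exact h.exP2 hp hq hpq hD
  constructor
  · intro h4
    have hprime : ∀ l : ℕ, l.Prime → (l : ℤ) ∣ D → l = p ∨ l = q := by
      intro l hl hlD
      rcases hD with ⟨-, rfl⟩ | rfl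
      · rw [Int.dvd_neg] at hlD
        exact Or.inr ((Nat.prime_dvd_prime_iff_eq hl hq).1 (by exact_mod_cast hlD))
      · rw [Int.dvd_neg] at hlD
        have : l ∣ p * q := by exact_mod_cast hlD
        rcases hl.dvd_mul.1 this with h1 | h1
        · exact Or.inl ((Nat.prime_dvd_prime_iff_eq hl hp).1 h1)
        · exact Or.inr ((Nat.prime_dvd_prime_iff_eq hl hq).1 h1)
    rcases hp4 with rfl | hp4
    · refine h.main1 hp hq hpq hq4 hP0 hP hD (ω := s) (Δ := 4 * D) ?_ ?_ h4
      · rw [h.conj]; push_cast; rw [← h.sq]; ring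
      · intro l hl hlD
        have hli : Prime (l : ℤ) := Nat.prime_iff_prime_int.1 hl
        rcases hli.dvd_or_dvd hlD with h1 | h1
        · left
          have h2 : l ∣ 2 ^ 2 := by exact_mod_cast h1
          exact (Nat.prime_dvd_prime_iff_eq hl Nat.prime_two).1 (hl.dvd_of_dvd_pow h2)
        · exact hprime l hl h1
    · have hD' : D = -(p * q : ℤ) := by
        rcases hD with ⟨rfl, -⟩ | hD
        · omega
        · exact hD
      obtain ⟨k, hk⟩ : ∃ k : ℤ, 1 - D = 4 * k := by
        obtain ⟨a, ha⟩ : ∃ a, p = 4 * a + 3 := ⟨p / 4, by omega⟩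
        obtain ⟨b, hb⟩ : ∃ b, q = 4 * b + 1 := ⟨q / 4, by omega⟩
        refine ⟨4 * a * b + a + 3 * b + 1, ?_⟩
        rw [hD', ha, hb]; push_cast; ring
      obtain ⟨z, hz⟩ := h.dvd_of (w := 1 + s) (d := 2) (t := 1) (n := k) (by norm_num)
        (by rw [map_add, map_one, h.conj]; push_cast; ring)
        (by
          rw [map_add, map_one, h.conj]
          have : ((1 - D : ℤ) : 𝓞 K) = ((4 * k : ℤ) : 𝓞 K) := by rw [hk]
          push_cast at this ⊢
          rw [← h.sq] at this
          linear_combination this)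
      refine h.main1 hp hq hpq hq4 hP0 hP hD (ω := z) (Δ := D) ?_ hprime h4
      have hz2 := congrArg σ hz
      simp only [map_add, map_one, map_mul, map_intCast, h.conj] at hz2
      push_cast at hz hz2
      have : z - σ z = s := by
        apply mul_left_cancel₀ (two_ne_zero (α := 𝓞 K))
        linear_combination hz2 - hz
      rw [this, h.sq]
  · intro hsq
    obtain ⟨l, hl, hns, y, hy1, hy2⟩ : ∃ l : ℕ, l.Prime ∧ ¬ IsSquare (l : ZMod q) ∧
        ∃ y : ℤ, (l : ℤ) ∣ y ^ 2 - D ∧ ¬ (l : ℤ) ∣ 2 * y := by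
      rcases hD with ⟨-, rfl⟩ | rfl
      · exact exL1 hq hq4
      · exact exL2 hp hq hq4 hpq
    obtain ⟨I, hI0, hI⟩ := h.splitPrime hl y hy1 hy2
    exact h.main2 hp hq hpq hq4 hP0 hP hD hns hI0 hI hsq

theorem finrank_two {m : ℤ} (hm : m < 0) (z : ℂ) (hz : z ^ 2 = m) :
    FiniteDimensional ℚ (IntermediateField.adjoin ℚ {z}) ∧
      Module.finrank ℚ (IntermediateField.adjoin ℚ {z}) = 2 := by
  have hirr : Irreducible (Polynomial.X ^ 2 - Polynomial.C (m : ℚ)) := by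
    rw [X_pow_sub_C_irreducible_iff_of_prime Nat.prime_two]
    intro b hb
    have : (m : ℚ) < 0 := by exact_mod_cast hm
    nlinarith [sq_nonneg b]
  have hmon : (Polynomial.X ^ 2 - Polynomial.C (m : ℚ)).Monic := by monicity!
  have hroot : Polynomial.aeval z (Polynomial.X ^ 2 - Polynomial.C (m : ℚ)) = 0 := by
    simp [hz]
  have hinteg : IsIntegral ℚ z := ⟨_, hmon, hroot⟩
  refine ⟨IntermediateField.adjoin.finiteDimensional hinteg, ?_⟩
  rw [IntermediateField.adjoin.finrank hinteg, ← minpoly.eq_of_irreducible_of_monic hirr hroot hmon]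
  exact Polynomial.natDegree_X_pow_sub_C

theorem stmt16 (p q : ℕ) (hp : p.Prime) (hq : q.Prime) (hq4 : q % 4 = 1)
    (pstar : ℤ)
    (hps : (p % 4 = 3 ∧ pstar = -(p : ℤ)) ∨ (p = 2 ∧ (pstar = -4 ∨ pstar = -8)))
    (hpq : p ≠ q)
    (L : IntermediateField ℚ ℂ) (hL : L = Qsqrt (pstar * q)) :
    ¬ (4 ∣ Nat.card (ClassGroup (𝓞 L))) ↔
      ((Odd p ∧ @legendreSym p ⟨hp⟩ q = -1 ∧ @legendreSym q ⟨hq⟩ (-(p : ℤ)) = -1) ∨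
        (p = 2 ∧ q % 8 = 5)) := by
  haveI : Fact p.Prime := ⟨hp⟩
  haveI : Fact q.Prime := ⟨hq⟩
  have hq2 : q ≠ 2 := by omega
  have hp0 := hp.pos
  have hq0 := hq.pos
  have hpneg : pstar < 0 := by omega
  have hm : pstar * q < 0 := mul_neg_of_neg_of_pos hpneg (by exact_mod_cast hq0)
  set z : ℂ := ((pstar * q : ℤ) : ℂ) ^ ((1 : ℂ) / 2) with hzdef
  have hz : z ^ 2 = ((pstar * q : ℤ) : ℂ) := by
    rw [hzdef, one_div]
    exact Complex.cpow_nat_inv_pow _ two_ne_zero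
  have hL' : L = IntermediateField.adjoin ℚ {z} := hL
  clear_value z
  subst hL'
  obtain ⟨hfd, hfr⟩ := finrank_two hm z hz
  haveI : NumberField (IntermediateField.adjoin ℚ {z}) := { to_finiteDimensional := hfd }
  let zL : IntermediateField.adjoin ℚ {z} := ⟨z, IntermediateField.mem_adjoin_simple_self ℚ z⟩
  have hzL : zL ^ 2 = ((pstar * q : ℤ) : IntermediateField.adjoin ℚ {z}) := by
    apply Subtype.ext
    push_cast
    push_cast at hz
    exact hz
  have hcrit : 4 ∣ Nat.card (ClassGroup (𝓞 (IntermediateField.adjoin ℚ {z}))) ↔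
      IsSquare (p : ZMod q) := by
    rcases hps with ⟨hp4, rfl⟩ | ⟨rfl, rfl | rfl⟩
    · exact criterion hfr hp hq hpq hq4 (D := -(p * q : ℤ)) (Or.inr rfl) (Or.inr hp4) zL
        (by rw [hzL]; congr 1; ring)
    · refine criterion hfr hp hq hpq hq4 (D := -(q : ℤ)) (Or.inl ⟨rfl, rfl⟩) (Or.inl rfl) (zL / 2) ?_
      rw [div_pow, hzL]; push_cast; ring
    · refine criterion hfr hp hq hpq hq4 (D := -((2 : ℕ) * q : ℤ)) (Or.inr rfl) (Or.inl rfl) (zL / 2) ?_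
      rw [div_pow, hzL]; push_cast; ring
  rw [hcrit]
  by_cases hp2 : p = 2
  · subst hp2
    rw [Nat.cast_ofNat, ZMod.exists_sq_eq_two_iff hq2]
    constructor
    · intro h; right; exact ⟨rfl, by omega⟩
    · rintro (⟨h, -⟩ | ⟨-, h⟩)
      · exact absurd h (by decide)
      · omega
  · have e1 : legendreSym p q = -1 ↔ ¬ IsSquare (p : ZMod q) := by
      rw [legendreSym.eq_neg_one_iff, Int.cast_natCast,
        ZMod.exists_sq_eq_prime_iff_of_mod_four_eq_one hq4 hp2]
    have e2 : legendreSym q (-(p : ℤ)) = -1 ↔ ¬ IsSquare (p : ZMod q) := by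
      rw [legendreSym.eq_neg_one_iff]
      push_cast
      obtain ⟨i, hi⟩ : IsSquare (-1 : ZMod q) := ZMod.exists_sq_eq_neg_one_iff.2 (by omega)
      have hii : IsSquare (-1 : ZMod q) := ⟨i, hi⟩
      rw [not_iff_not]
      constructor
      · intro h; have := hii.mul h; simpa using this
      · intro h; have := hii.mul h; simpa using this
    constructor
    · intro h
      exact Or.inl ⟨hp.odd_of_ne_two hp2, e1.2 h, e2.2 h⟩
    · rintro (⟨-, h, -⟩ | ⟨h, -⟩)
      · exact e1.1 h
      · exact absurd h hp2
end

section
/- Let u be a positive odd integer, let p and q be primes with p ≡ 3 (mod 4), q ≡ 1 (mod 4), and Legendre symbol (q/p) = -1, and let L = ℚ(√(-pq)). Assume that Cl(L) is isomorphic to C₂ × A for a finite abelian group A of odd order. Let ℓ be an odd prime that splits in L and let 𝔩 be a prime ideal of the ring of integers of L above ℓ. If the order of the class of 𝔩 in Cl(L) equals 2u, then (ℓ/p) = -1 and there exist integers X, Y with X² + pqY² = 4ℓᵘp. If the order of the class of 𝔩 in Cl(L) equals u, then (ℓ/p) = 1 and there exist integers X, Y with X² + pqY² = 4ℓᵘ.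 -/
open NumberField

theorem aux_rat_int {r : ℚ} {m : ℤ} (h : r ^ 2 = m) : ∃ c : ℤ, r = c := by
  have : IsIntegral ℤ r := by
    refine IsIntegral.of_pow (n := 2) (by norm_num) ?_
    rw [h]; exact isIntegral_algebraMap (R := ℤ) (x := m)
  obtain ⟨c, hc⟩ := IsIntegrallyClosed.isIntegral_iff.mp this
  exact ⟨c, by simpa using hc.symm⟩

theorem aux_sqfree {p q : ℕ} (hp : p.Prime) (hq : q.Prime) (hpq : p ≠ q) {b : ℚ} {m : ℤ}
    (h : (p : ℚ) * q * b ^ 2 = m) : ∃ c : ℤ, b = c := by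
  have hp0 : (p : ℚ) ≠ 0 := by exact_mod_cast hp.ne_zero
  have hq0 : (q : ℚ) ≠ 0 := by exact_mod_cast hq.ne_zero
  obtain ⟨c, hc⟩ := aux_rat_int (r := p * q * b) (m := m * p * q) (by push_cast; rw [← h]; ring)
  have hc2 : c ^ 2 = m * p * q := by
    have : (c : ℚ) ^ 2 = m * p * q := by rw [← hc, ← h]; ring
    exact_mod_cast this
  have h1 : (p : ℤ) ∣ c := (Nat.prime_iff_prime_int.mp hp).dvd_of_dvd_pow
    (n := 2) ⟨m * q, by rw [hc2]; ring⟩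
  have h2 : (q : ℤ) ∣ c := (Nat.prime_iff_prime_int.mp hq).dvd_of_dvd_pow
    (n := 2) ⟨m * p, by rw [hc2]; ring⟩
  have h3 : (p : ℤ) * q ∣ c := IsCoprime.mul_dvd
    (Nat.isCoprime_iff_coprime.mpr ((Nat.coprime_primes hp hq).mpr hpq)) h1 h2
  obtain ⟨d, hd⟩ := h3
  refine ⟨d, ?_⟩
  rw [hd] at hc
  push_cast at hc
  exact mul_left_cancel₀ (mul_ne_zero hp0 hq0) hc

theorem aux_group {G : Type*} [CommGroup G] (A : Type) [CommGroup A] (hA : Odd (Nat.card A))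
    (e : G ≃* (Multiplicative (ZMod 2) × A)) {g h : G} (hg : g ^ 2 = 1) (hg1 : g ≠ 1)
    (hh : h ^ 2 = 1) (hh1 : h ≠ 1) : g * h = 1 := by
  have key : ∀ x : G, x ^ 2 = 1 → (e x).2 = 1 := by
    intro x hx
    have h1 : (e x).2 ^ 2 = 1 := by rw [← Prod.pow_snd, ← map_pow, hx, map_one]; rfl
    have h2 : (e x).2 ^ Nat.card A = 1 := pow_card_eq_one'
    obtain ⟨k, hk⟩ := hA
    rwa [hk, pow_succ, pow_mul, h1, one_pow, one_mul] at h2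
  have key2 : ∀ x : G, x ^ 2 = 1 → x ≠ 1 → (e x).1 ≠ 1 := by
    intro x hx hx1 h
    apply hx1
    apply e.injective
    rw [map_one]
    exact Prod.ext h (key x hx)
  have dec : ∀ a b : Multiplicative (ZMod 2), a ≠ 1 → b ≠ 1 → a * b = 1 := by decide
  apply e.injective
  rw [map_one, map_mul]
  refine Prod.ext (dec _ _ (key2 g hg hg1) (key2 h hh hh1)) ?_
  rw [Prod.snd_mul, key g hg, key h hh]
  simp

section
variable {K : Type*} [Field K] [NumberField K]

theorem aux_basis {N : ℕ} (hN : 0 < N) {s : K} (hs : s ^ 2 = -(N : K))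
    (hspan : ∀ x : K, ∃ a b : ℚ, x = algebraMap ℚ K a + algebraMap ℚ K b * s) (a b : ℚ) :
    Algebra.norm ℚ (algebraMap ℚ K a + algebraMap ℚ K b * s) = a ^ 2 + N * b ^ 2 ∧
    Algebra.trace ℚ K (algebraMap ℚ K a + algebraMap ℚ K b * s) = 2 * a := by
  have hli : LinearIndependent ℚ ![(1 : K), s] := by
    rw [LinearIndependent.pair_iff]
    intro a b hab
    simp only [Algebra.smul_def, mul_one] at hab
    have hb : a ^ 2 + N * b ^ 2 = 0 := by
      apply (algebraMap ℚ K).injective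
      simp only [map_add, map_mul, map_pow, map_natCast, map_zero]
      linear_combination (algebraMap ℚ K a - algebraMap ℚ K b * s) * hab + (algebraMap ℚ K b)^2 * hs
    have hN' : (0 : ℚ) < N := by exact_mod_cast hN
    have h1 : b ^ 2 = 0 := by nlinarith [sq_nonneg a, sq_nonneg b]
    have h2 : a ^ 2 = 0 := by rw [h1] at hb; simpa using hb
    exact ⟨by simpa using h2, by simpa using h1⟩
  have hsp : ⊤ ≤ Submodule.span ℚ (Set.range ![(1 : K), s]) := by
    intro x _
    obtain ⟨a, b, rfl⟩ := hspan x
    rw [Matrix.range_cons_cons_empty, Submodule.mem_span_pair]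
    exact ⟨a, b, by simp [Algebra.smul_def]⟩
  let B := Module.Basis.mk hli hsp
  have hB0 : B 0 = 1 := by simp [B]
  have hB1 : B 1 = s := by simp [B]
  have hM : Algebra.leftMulMatrix B (algebraMap ℚ K a + algebraMap ℚ K b * s)
      = !![a, -(N * b); b, a] := by
    have key : ∀ (j : Fin 2) (c d : ℚ),
      (algebraMap ℚ K a + algebraMap ℚ K b * s) * B j = c • B 0 + d • B 1 →
      ∀ i, Algebra.leftMulMatrix B (algebraMap ℚ K a + algebraMap ℚ K b * s) i j = ![c, d] i := by
      intro j c d h i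
      rw [Algebra.leftMulMatrix_eq_repr_mul, h]
      fin_cases i <;> simp
    have k0 := key 0 a b (by rw [hB0, hB1]; simp [Algebra.smul_def])
    have k1 := key 1 (-(N * b)) a (by
      rw [hB0, hB1]; simp only [Algebra.smul_def, map_neg, map_mul, map_natCast]
      linear_combination (algebraMap ℚ K b) * hs)
    ext i j
    fin_cases j
    · simp only [Fin.zero_eta]; rw [k0 i]; fin_cases i <;> rfl
    · simp only [Fin.mk_one]; rw [k1 i]; fin_cases i <;> rfl
  constructor
  · rw [Algebra.norm_eq_matrix_det B, hM, Matrix.det_fin_two_of]; ring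
  · rw [Algebra.trace_eq_matrix_trace B, hM, Matrix.trace_fin_two_of]; ring

theorem aux_norm {p q : ℕ} (hp : p.Prime) (hq : q.Prime) (hpq : p ≠ q) {s : K}
    (hs : s ^ 2 = -((p * q : ℕ) : K))
    (hspan : ∀ x : K, ∃ a b : ℚ, x = algebraMap ℚ K a + algebraMap ℚ K b * s) (x : 𝓞 K) :
    ∃ X Y : ℤ, X ^ 2 + (p : ℤ) * q * Y ^ 2 = 4 * (Ideal.absNorm (Ideal.span {x}) : ℤ) := by
  obtain ⟨a, b, hab⟩ := hspan x
  obtain ⟨hn, ht⟩ := aux_basis (Nat.mul_pos hp.pos hq.pos) hs hspan a b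
  rw [← hab] at hn ht
  have hti : IsIntegral ℤ (Algebra.trace ℚ K (x : K)) := Algebra.isIntegral_trace x.isIntegral_coe
  obtain ⟨T, hT⟩ := IsIntegrallyClosed.isIntegral_iff.mp hti
  rw [ht] at hT
  simp only [eq_intCast] at hT
  rw [← Algebra.coe_norm_int] at hn
  push_cast at hn
  obtain ⟨Y, hY⟩ := aux_sqfree hp hq hpq (b := 2 * b) (m := 4 * Algebra.norm ℤ x - T ^ 2) (by
    push_cast; rw [hn, hT]; ring)
  have e : T ^ 2 + (p : ℤ) * q * Y ^ 2 = 4 * Algebra.norm ℤ x := by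
    have : (T : ℚ) ^ 2 + (p : ℚ) * q * Y ^ 2 = 4 * (Algebra.norm ℤ x : ℤ) := by
      rw [hn, hT, ← hY]; ring
    exact_mod_cast this
  refine ⟨T, Y, ?_⟩
  rw [Ideal.absNorm_span_singleton, Int.natAbs_of_nonneg, e]
  have : 0 ≤ T ^ 2 + (p : ℤ) * q * Y ^ 2 := by positivity
  linarith

theorem aux_absNorm_natCast {p q : ℕ} (hp : p.Prime) (hq : q.Prime) {s : K}
    (hs : s ^ 2 = -((p * q : ℕ) : K))
    (hspan : ∀ x : K, ∃ a b : ℚ, x = algebraMap ℚ K a + algebraMap ℚ K b * s) (n : ℕ) :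
    Ideal.absNorm (Ideal.span {(n : 𝓞 K)}) = n ^ 2 := by
  obtain ⟨hn, -⟩ := aux_basis (Nat.mul_pos hp.pos hq.pos) hs hspan n 0
  rw [Ideal.absNorm_span_singleton]
  have : Algebra.norm ℤ (n : 𝓞 K) = n ^ 2 := by
    have h : ((Algebra.norm ℤ (n : 𝓞 K) : ℤ) : ℚ) = n ^ 2 := by
      rw [Algebra.coe_norm_int]
      simpa using hn
    exact_mod_cast h
  rw [this]; simp

theorem aux_exists_p {p q : ℕ} (hp : p.Prime) (hq : q.Prime) (hpq : p ≠ q) {s : K}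
    (hs : s ^ 2 = -((p * q : ℕ) : K))
    (hspan : ∀ x : K, ∃ a b : ℚ, x = algebraMap ℚ K a + algebraMap ℚ K b * s) :
    ∃ P : Ideal (𝓞 K), P ^ 2 = Ideal.span {(p : 𝓞 K)} ∧ Ideal.absNorm P = p := by
  have hsi : IsIntegral ℤ s := by
    refine IsIntegral.of_pow (n := 2) (by norm_num) ?_
    rw [hs]
    have := isIntegral_algebraMap (R := ℤ) (A := K) (x := -((p * q : ℕ) : ℤ))
    simpa using this
  let t : 𝓞 K := ⟨s, hsi⟩
  have ht : t ^ 2 = -((p : 𝓞 K) * q) := by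
    apply RingOfIntegers.ext
    have h1 : ((t ^ 2 : 𝓞 K) : K) = s ^ 2 := rfl
    rw [h1, hs]; simp
  have h2 : (Ideal.span {(p : 𝓞 K), t}) ^ 2 = Ideal.span {(p : 𝓞 K)} := by
    apply le_antisymm
    · rw [pow_two, Ideal.span_pair_mul_span_pair, Ideal.span_le]
      rintro x (rfl | rfl | rfl | rfl) <;> simp only [SetLike.mem_coe, Ideal.mem_span_singleton]
      · exact ⟨p, rfl⟩
      · exact ⟨t, rfl⟩
      · exact ⟨t, mul_comm _ _⟩
      · exact ⟨-q, by rw [← pow_two, ht]; ring⟩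
    · rw [Ideal.span_singleton_le_iff_mem]
      obtain ⟨a, b, hab⟩ := Nat.isCoprime_iff_coprime.mpr ((Nat.coprime_primes hp hq).mpr hpq)
      have hab' : (a : 𝓞 K) * p + b * q = 1 := by exact_mod_cast congrArg (Int.cast : ℤ → 𝓞 K) hab
      have m1 : (p : 𝓞 K) ∈ Ideal.span {(p : 𝓞 K), t} := Ideal.subset_span (by simp)
      have m2 : t ∈ Ideal.span {(p : 𝓞 K), t} := Ideal.subset_span (by simp)
      have e : (p : 𝓞 K) = a * (p ^ 2) + (-b) * t ^ 2 := by
        rw [ht]; linear_combination -(p : 𝓞 K) * hab'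
      have := Ideal.add_mem _ (Ideal.mul_mem_left _ (a : 𝓞 K) (Ideal.pow_mem_pow m1 2))
        (Ideal.mul_mem_left _ (-b : 𝓞 K) (Ideal.pow_mem_pow m2 2))
      rwa [← e] at this
  refine ⟨_, h2, ?_⟩
  have := congrArg Ideal.absNorm h2
  rw [map_pow, aux_absNorm_natCast hp hq hs hspan] at this
  exact Nat.pow_left_injective (n := 2) (by norm_num) this

theorem aux_main (u : ℕ) (hu : Odd u)
    (p q : ℕ) (hp : p.Prime) (hq : q.Prime)
    (hp4 : p % 4 = 3) (hq4 : q % 4 = 1)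
    (hleg : @legendreSym p ⟨hp⟩ (q : ℤ) = -1) {s : K}
    (hs : s ^ 2 = -((p * q : ℕ) : K))
    (hspan : ∀ x : K, ∃ a b : ℚ, x = algebraMap ℚ K a + algebraMap ℚ K b * s)
    (A : Type) [CommGroup A] (hAodd : Odd (Nat.card A))
    (e : ClassGroup (𝓞 K) ≃* (Multiplicative (ZMod 2) × A))
    (ell : ℕ) (hell : ell.Prime) 
    (hsplit : ∃ P Q : Ideal (𝓞 K), P.IsPrime ∧ Q.IsPrime ∧ P ≠ Q ∧
      P * Q = Ideal.span {(ell : 𝓞 K)})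
    (I : Ideal (𝓞 K)) (hI : I.IsPrime) (hI0 : I ≠ ⊥)
    (hmem : (ell : 𝓞 K) ∈ I) :
    (IsLeast {n : ℕ | 0 < n ∧ (I ^ n).IsPrincipal} (2 * u) →
      @legendreSym p ⟨hp⟩ (ell : ℤ) = -1 ∧
        ∃ X Y : ℤ, X ^ 2 + (p : ℤ) * q * Y ^ 2 = 4 * (ell : ℤ) ^ u * p) ∧
    (IsLeast {n : ℕ | 0 < n ∧ (I ^ n).IsPrincipal} u →
      @legendreSym p ⟨hp⟩ (ell : ℤ) = 1 ∧
        ∃ X Y : ℤ, X ^ 2 + (p : ℤ) * q * Y ^ 2 = 4 * (ell : ℤ) ^ u) := by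
  have hpq : p ≠ q := by rintro rfl; omega
  have : Fact p.Prime := ⟨hp⟩
  have hpI := Nat.prime_iff_prime_int.mp hp
  have hp2 : ¬ (p : ℤ) ∣ 2 := by
    intro h
    have := Int.le_of_dvd (by norm_num) h
    omega
  obtain ⟨𝔭, h𝔭2, h𝔭n⟩ := aux_exists_p hp hq hpq hs hspan
  have h𝔭0 : 𝔭 ≠ ⊥ := by
    rintro rfl
    rw [Ideal.absNorm_bot] at h𝔭n
    exact hp.ne_zero h𝔭n.symm
  obtain ⟨P, Q, hP, hQ, hPQ, hmul⟩ := hsplit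
  have hell0 : (ell : 𝓞 K) ≠ 0 := by exact_mod_cast hell.ne_zero
  have hPQ0 : P * Q ≠ ⊥ := by rw [hmul]; simpa using hell0
  have hP0 : P ≠ ⊥ := by rintro rfl; simp at hPQ0
  have hQ0 : Q ≠ ⊥ := by rintro rfl; simp at hPQ0
  have hPm := hP.isMaximal hP0
  have hQm := hQ.isMaximal hQ0
  have hnn : Ideal.absNorm P * Ideal.absNorm Q = ell ^ 2 := by
    rw [← map_mul, hmul, aux_absNorm_natCast hp hq hs hspan]
  have hnP1 : Ideal.absNorm P ≠ 1 := by rw [Ne, Ideal.absNorm_eq_one_iff]; exact hP.ne_top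
  have hnQ1 : Ideal.absNorm Q ≠ 1 := by rw [Ne, Ideal.absNorm_eq_one_iff]; exact hQ.ne_top
  obtain ⟨hnP, hnQ⟩ := (Nat.Prime.mul_eq_prime_sq_iff hell hnP1 hnQ1).mp hnn
  have hnI : Ideal.absNorm I = ell := by
    have : P * Q ≤ I := by rwa [hmul, Ideal.span_singleton_le_iff_mem]
    rcases hI.mul_le.mp this with h | h
    · rw [← hPm.eq_of_le hI.ne_top h, hnP]
    · rw [← hQm.eq_of_le hI.ne_top h, hnQ]
  have hellp : ell ≠ p := by
    rintro rfl
    have h𝔭p : 𝔭.IsPrime := Ideal.isPrime_of_irreducible_absNorm (by rw [h𝔭n]; exact hell)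
    have h𝔭m := h𝔭p.isMaximal h𝔭0
    have h : 𝔭 ^ 2 = P * Q := by rw [h𝔭2, hmul]
    have h1 : 𝔭 ≤ P := hP.le_of_pow_le (n := 2) (h.trans_le Ideal.mul_le_left)
    have h2 : 𝔭 ≤ Q := hQ.le_of_pow_le (n := 2) (h.trans_le Ideal.mul_le_right)
    exact hPQ ((h𝔭m.eq_of_le hP.ne_top h1).symm.trans (h𝔭m.eq_of_le hQ.ne_top h2))
  have hpell : ¬ (p : ℤ) ∣ ell := by
    intro h
    exact hellp ((Nat.prime_dvd_prime_iff_eq hp hell).mp (by exact_mod_cast h)).symm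
  have hprin : ∀ J : Ideal (𝓞 K), J.IsPrincipal →
      ∃ X Y : ℤ, X ^ 2 + (p : ℤ) * q * Y ^ 2 = 4 * (Ideal.absNorm J : ℤ) := by
    rintro J ⟨x, hx⟩
    obtain ⟨X, Y, h⟩ := aux_norm hp hq hpq hs hspan x
    exact ⟨X, Y, by rw [h, hx]⟩
  have hcast0 : ∀ n : ℤ, ((n : ZMod p) ≠ 0) ↔ ¬ (p : ℤ) ∣ n := fun n =>
    not_congr (ZMod.intCast_zmod_eq_zero_iff_dvd n p)
  have hpow1 : ∀ a : ℤ, ¬ (p : ℤ) ∣ a → legendreSym p (a ^ u) = legendreSym p a := by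
    intro a ha
    obtain ⟨k, rfl⟩ := hu
    have h1 : legendreSym p (a ^ (2 * k + 1)) = legendreSym p a ^ (2 * k + 1) :=
      map_pow (legendreSym.hom p) a _
    rw [h1, pow_succ, pow_mul, legendreSym.sq_one p ((hcast0 a).mpr ha), one_pow, one_mul]
  have hmod : ∀ a b : ℤ, (p : ℤ) ∣ a - b → legendreSym p a = legendreSym p b := by
    intro a b h
    rw [legendreSym.mod p a, legendreSym.mod p b]
    congr 1
    exact Int.emod_eq_emod_iff_emod_sub_eq_zero.mpr (Int.emod_eq_zero_of_dvd h)
  have hmk : ∀ J : Ideal (𝓞 K), J ≠ ⊥ → J ∈ nonZeroDivisors (Ideal (𝓞 K)) := fun J hJ =>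
    mem_nonZeroDivisors_of_ne_zero hJ
  constructor
  · rintro ⟨⟨-, hpr⟩, hmin⟩
    have hupos : 0 < u := hu.pos
    have hnpr : ¬ (I ^ u).IsPrincipal := by
      intro h
      have := hmin ⟨hupos, h⟩
      omega
    have hnp : ¬ 𝔭.IsPrincipal := by
      intro h
      obtain ⟨X, Y, hXY⟩ := hprin _ h
      rw [h𝔭n] at hXY
      have hpX : (p : ℤ) ∣ X := hpI.dvd_of_dvd_pow (n := 2)
        ⟨4 - q * Y ^ 2, by linear_combination hXY⟩
      obtain ⟨Z, rfl⟩ := hpX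
      have h4 : (p : ℤ) * Z ^ 2 + q * Y ^ 2 = 4 := by
        apply mul_left_cancel₀ hpI.ne_zero
        linear_combination hXY
      have hq5 : (5 : ℤ) ≤ q := by
        have := hq.two_le
        have : 5 ≤ q := by omega
        exact_mod_cast this
      have hY : Y = 0 := by
        by_contra hY
        have h1 : 1 ≤ Y ^ 2 := by have := sq_pos_of_ne_zero hY; omega
        have h2 : 0 ≤ (p : ℤ) * Z ^ 2 := by positivity
        nlinarith
      have hd : (p : ℤ) ∣ 2 ^ 2 := ⟨Z ^ 2, by rw [hY] at h4; linear_combination -h4⟩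
      exact hp2 (hpI.dvd_of_dvd_pow hd)
    have hIu : I ^ u ≠ ⊥ := pow_ne_zero u hI0
    have hprod := aux_group A hAodd e
      (g := ClassGroup.mk0 ⟨I ^ u, hmk _ hIu⟩) (h := ClassGroup.mk0 ⟨𝔭, hmk _ h𝔭0⟩)
      (by
        rw [← map_pow]
        change ClassGroup.mk0 ⟨(I ^ u) ^ 2, _⟩ = 1
        rw [ClassGroup.mk0_eq_one_iff, ← pow_mul, mul_comm]
        exact hpr)
      (by rw [Ne, ClassGroup.mk0_eq_one_iff]; exact hnpr)
      (by
        rw [← map_pow]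
        change ClassGroup.mk0 ⟨𝔭 ^ 2, _⟩ = 1
        rw [ClassGroup.mk0_eq_one_iff, h𝔭2]
        exact ⟨_, rfl⟩)
      (by rw [Ne, ClassGroup.mk0_eq_one_iff]; exact hnp)
    rw [← map_mul] at hprod
    change ClassGroup.mk0 ⟨I ^ u * 𝔭, _⟩ = 1 at hprod
    rw [ClassGroup.mk0_eq_one_iff] at hprod
    obtain ⟨X, Y, hXY⟩ := hprin _ hprod
    rw [map_mul, map_pow, hnI, h𝔭n] at hXY
    push_cast at hXY
    refine ⟨?_, X, Y, by rw [hXY]; ring⟩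
    have hpX : (p : ℤ) ∣ X := hpI.dvd_of_dvd_pow (n := 2)
      ⟨4 * ell ^ u - q * Y ^ 2, by linear_combination hXY⟩
    obtain ⟨Z, rfl⟩ := hpX
    have h4 : (p : ℤ) * Z ^ 2 + q * Y ^ 2 = 2 ^ 2 * ell ^ u := by
      apply mul_left_cancel₀ hpI.ne_zero
      linear_combination hXY
    have hY : ¬ (p : ℤ) ∣ Y := by
      rintro ⟨W, rfl⟩
      have : (p : ℤ) ∣ 2 ^ 2 * ell ^ u := ⟨Z ^ 2 + q * p * W ^ 2, by rw [← h4]; ring⟩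
      rcases hpI.dvd_or_dvd this with h | h
      · exact hp2 (hpI.dvd_of_dvd_pow h)
      · exact hpell (hpI.dvd_of_dvd_pow h)
    have hl := hmod (2 ^ 2 * ell ^ u) (q * Y ^ 2) ⟨Z ^ 2, by linear_combination -h4⟩
    rw [legendreSym.mul, legendreSym.mul, legendreSym.sq_one' p ((hcast0 2).mpr hp2),
      legendreSym.sq_one' p ((hcast0 Y).mpr hY), hpow1 _ hpell, one_mul, mul_one] at hl
    rw [hl, hleg]
  · rintro ⟨⟨-, hpr⟩, -⟩
    obtain ⟨X, Y, hXY⟩ := hprin _ hpr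
    rw [map_pow, hnI] at hXY
    push_cast at hXY
    refine ⟨?_, X, Y, hXY⟩
    have hX : ¬ (p : ℤ) ∣ X := by
      rintro ⟨W, rfl⟩
      have : (p : ℤ) ∣ 2 ^ 2 * ell ^ u := ⟨p * W ^ 2 + q * Y ^ 2, by linear_combination -hXY⟩
      rcases hpI.dvd_or_dvd this with h | h
      · exact hp2 (hpI.dvd_of_dvd_pow h)
      · exact hpell (hpI.dvd_of_dvd_pow h)
    have hl := hmod (2 ^ 2 * ell ^ u) (X ^ 2) ⟨q * Y ^ 2, by linear_combination -hXY⟩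
    rwa [legendreSym.mul, legendreSym.sq_one' p ((hcast0 2).mpr hp2),
      legendreSym.sq_one' p ((hcast0 X).mpr hX), hpow1 _ hpell, one_mul] at hl

end

theorem aux_adjoin {z : ℂ} {c : ℚ} (hz : z ^ 2 = (c : ℂ)) {x : ℂ}
    (hx : x ∈ IntermediateField.adjoin ℚ {z}) :
    ∃ a b : ℚ, x = a + b * z := by
  have hzi : IsIntegral ℚ z := by
    refine IsIntegral.of_pow (n := 2) (by norm_num) ?_
    rw [hz]; exact isIntegral_algebraMap (R := ℚ) (x := c)
  rw [← IntermediateField.mem_toSubalgebra,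
    IntermediateField.adjoin_simple_toSubalgebra_of_isAlgebraic hzi.isAlgebraic] at hx
  induction hx using Algebra.adjoin_induction with
  | mem x hx => exact ⟨0, 1, by simpa using hx⟩
  | algebraMap r => exact ⟨r, 0, by simp⟩
  | add x y _ _ h1 h2 =>
    obtain ⟨a, b, rfl⟩ := h1
    obtain ⟨a', b', rfl⟩ := h2
    exact ⟨a + a', b + b', by push_cast; ring⟩
  | mul x y _ _ h1 h2 =>
    obtain ⟨a, b, rfl⟩ := h1
    obtain ⟨a', b', rfl⟩ := h2
    exact ⟨a * a' + b * b' * c, a * b' + b * a', by push_cast; linear_combination (b : ℂ) * b' * hz⟩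

/-- Norm-equation criterion (case `p ≡ 3 (mod 4)` of Theorem on splitting primes):
let `u` be odd and positive, `p ≡ 3 (mod 4)`, `q ≡ 1 (mod 4)` primes with `(q/p) = -1`,
and `L = ℚ(√(-pq))` with `Cl(L) ≅ C₂ × A`, `A` of odd order.  If `ell` is an odd prime
splitting in `L` and `𝔩` is a prime of `L` above `ell` whose class has order `2u`
(i.e. `2u` is the least positive `n` with `𝔩ⁿ` principal), then `(ell/p) = -1` and
`X² + pqY² = 4·ellᵘ·p` has an integer solution; if the class of `𝔩` has order `u`,
then `(ell/p) = 1` and `X² + pqY² = 4·ellᵘ` has an integer solution. -/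
theorem stmt17 (u : ℕ) (hu : Odd u) (hupos : 0 < u)
    (p q : ℕ) (hp : p.Prime) (hq : q.Prime)
    (hp4 : p % 4 = 3) (hq4 : q % 4 = 1)
    (hleg : @legendreSym p ⟨hp⟩ (q : ℤ) = -1)
    (L : IntermediateField ℚ ℂ) (hL : L = Qsqrt (-((p : ℤ) * q)))
    (A : Type) (_ : CommGroup A) (hAfin : Finite A) (hAodd : Odd (Nat.card A))
    (hiso : Nonempty (ClassGroup (𝓞 L) ≃* (Multiplicative (ZMod 2) × A)))
    (ell : ℕ) (hell : ell.Prime) (hellodd : Odd ell)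
    (hsplit : ∃ P Q : Ideal (𝓞 L), P.IsPrime ∧ Q.IsPrime ∧ P ≠ Q ∧
      P * Q = Ideal.span {(ell : 𝓞 L)})
    (𝔩 : Ideal (𝓞 L)) (h𝔩prime : 𝔩.IsPrime) (h𝔩ne : 𝔩 ≠ ⊥)
    (h𝔩mem : (ell : 𝓞 L) ∈ 𝔩) :
    (IsLeast {n : ℕ | 0 < n ∧ (𝔩 ^ n).IsPrincipal} (2 * u) →
      @legendreSym p ⟨hp⟩ (ell : ℤ) = -1 ∧
        ∃ X Y : ℤ, X ^ 2 + (p : ℤ) * q * Y ^ 2 = 4 * (ell : ℤ) ^ u * p) ∧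
    (IsLeast {n : ℕ | 0 < n ∧ (𝔩 ^ n).IsPrincipal} u →
      @legendreSym p ⟨hp⟩ (ell : ℤ) = 1 ∧
        ∃ X Y : ℤ, X ^ 2 + (p : ℤ) * q * Y ^ 2 = 4 * (ell : ℤ) ^ u) := by
  subst hL
  set z : ℂ := (((-((p : ℤ) * q) : ℤ)) : ℂ) ^ ((1 : ℂ) / 2) with hzdef
  have hz : z ^ 2 = ((-((p : ℚ) * q) : ℚ) : ℂ) := by
    rw [hzdef, one_div]
    have := Complex.cpow_nat_inv_pow (((-((p : ℤ) * q) : ℤ)) : ℂ) (n := 2) (by norm_num)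
    push_cast at this ⊢
    exact this
  have hzi : IsIntegral ℚ z := by
    refine IsIntegral.of_pow (n := 2) (by norm_num) ?_
    rw [hz]; exact isIntegral_algebraMap (R := ℚ) (x := (-((p : ℚ) * q) : ℚ))
  have hfd : FiniteDimensional ℚ (Qsqrt (-((p : ℤ) * q))) :=
    IntermediateField.adjoin.finiteDimensional hzi
  have hnf : NumberField (Qsqrt (-((p : ℤ) * q))) := { }
  have hzm : z ∈ Qsqrt (-((p : ℤ) * q)) := IntermediateField.mem_adjoin_simple_self ℚ z
  obtain ⟨e⟩ := hiso
  refine aux_main u hu p q hp hq hp4 hq4 hleg (s := ⟨z, hzm⟩) ?_ ?_ A hAodd e ell hell hsplit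
    𝔩 h𝔩prime h𝔩ne h𝔩mem
  · apply Subtype.ext
    push_cast at hz ⊢
    exact hz
  · rintro ⟨x, hx⟩
    obtain ⟨a, b, h⟩ := aux_adjoin hz hx
    refine ⟨a, b, Subtype.ext ?_⟩
    simpa using h
end

section
/- Let K/k be a Galois extension of number fields with Gal(K/k) ≅ V₄, Klein's four-group, and let k₁, k₂, k₃ be the three intermediate fields of K/k with [K : k_j] = [k_j : k] = 2. Writing h_odd(F) for the largest odd divisor of the class number h(F) of a number field F, one has h_odd(K) · h_odd(k)² = h_odd(k₁) · h_odd(k₂) · h_odd(k₃). (This is the cardinality form of the isomorphism Cl_odd(K) ≅ Cl_odd(k) × ∏_{j=1}^{3} Cl_odd(k_j)/Cl_odd(k), where Cl_odd denotes the subgroup of ideal classes of odd order.) -/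
open NumberField

/-- `hodd F` is the largest odd divisor of the class number of `F`,
i.e. the order of the odd part `Cl_odd(F)` of the class group. -/
noncomputable def hodd (F : Type*) [Field F] : ℕ :=
  Nat.card (ClassGroup (𝓞 F)) / 2 ^ (Nat.card (ClassGroup (𝓞 F))).factorization 2

section aux
open scoped nonZeroDivisors

/-- nonzero ideal transported along a ring isomorphism -/
noncomputable def idealMove {R S : Type*} [CommRing R] [CommRing S] [IsDomain R] [IsDomain S]
    (f : R ≃+* S) (I : (Ideal R)⁰) : (Ideal S)⁰ :=
  ⟨I.1.map (f : R →+* S), mem_nonZeroDivisors_iff_ne_zero.mpr <|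
    (Ideal.map_eq_bot_iff_of_injective (f := (f : R →+* S)) f.injective).not.mpr
      (mem_nonZeroDivisors_iff_ne_zero.mp I.2)⟩

theorem exists_act {R S : Type*} [CommRing R] [CommRing S] [IsDedekindDomain R]
    [IsDedekindDomain S] (f : R ≃+* S) :
    ∃ g : ClassGroup R →* ClassGroup S, ∀ I : (Ideal R)⁰,
      g (ClassGroup.mk0 I) = ClassGroup.mk0 (idealMove f I) := by
  let := (f : R →+* S).toAlgebra
  have : FaithfulSMul R S := (faithfulSMul_iff_algebraMap_injective R S).mpr f.injective
  have : Module.IsTorsionFree R S := inferInstance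
  exact ⟨ClassGroup.extendedHom R S, fun I => ClassGroup.extendedHom_mk0 R S I⟩

noncomputable def clAct {K : Type*} [Field K] [NumberField K] (σ : K ≃+* K) :
    ClassGroup (𝓞 K) →* ClassGroup (𝓞 K) :=
  (exists_act (RingOfIntegers.mapRingEquiv σ)).choose

theorem clAct_mk0 {K : Type*} [Field K] [NumberField K] (σ : K ≃+* K) (I : (Ideal (𝓞 K))⁰) :
    clAct σ (ClassGroup.mk0 I) =
      ClassGroup.mk0 (idealMove (RingOfIntegers.mapRingEquiv σ) I) :=
  (exists_act (RingOfIntegers.mapRingEquiv σ)).choose_spec I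

theorem clAct_comp {K : Type*} [Field K] [NumberField K] (σ τ ρ : K ≃+* K)
    (h : ∀ x, σ (τ x) = ρ x) (c : ClassGroup (𝓞 K)) :
    clAct σ (clAct τ c) = clAct ρ c := by
  obtain ⟨I, rfl⟩ := ClassGroup.mk0_surjective c
  rw [clAct_mk0, clAct_mk0, clAct_mk0]
  congr 1
  apply Subtype.ext
  simp only [idealMove, Ideal.map_map]
  congr 1
  ext x
  simp [h]

theorem clAct_id {K : Type*} [Field K] [NumberField K] (ρ : K ≃+* K)
    (h : ∀ x, ρ x = x) (c : ClassGroup (𝓞 K)) : clAct ρ c = c := by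
  obtain ⟨I, rfl⟩ := ClassGroup.mk0_surjective c
  rw [clAct_mk0]
  congr 1
  apply Subtype.ext
  simp only [idealMove]
  conv_rhs => rw [← Ideal.map_id I.1]
  congr 1
  ext x
  simp [h]

section rel
variable {F K : Type*} [Field F] [Field K] [NumberField F] [NumberField K] [Algebra F K]

theorem clAct_ext (σ : K ≃ₐ[F] K) (c : ClassGroup (𝓞 F)) :
    clAct σ.toRingEquiv (ClassGroup.extendedHom (𝓞 F) (𝓞 K) c) =
      ClassGroup.extendedHom (𝓞 F) (𝓞 K) c := by
  obtain ⟨I, rfl⟩ := ClassGroup.mk0_surjective c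
  rw [ClassGroup.extendedHom_mk0, clAct_mk0]
  congr 1
  apply Subtype.ext
  simp only [idealMove, Ideal.map_map]
  congr 1
  ext x
  exact σ.commutes (x : F)

theorem finrank_int : Module.finrank (𝓞 F) (𝓞 K) = Module.finrank F K := by
  exact (IsFractionRing.finrank_eq (𝓞 F) F (𝓞 K) K).symm

theorem ker_ext_pow (c : ClassGroup (𝓞 F)) (h : ClassGroup.extendedHom (𝓞 F) (𝓞 K) c = 1) :
    c ^ Module.finrank F K = 1 := by
  obtain ⟨I, rfl⟩ := ClassGroup.mk0_surjective c
  rw [ClassGroup.extendedHom_mk0, ClassGroup.mk0_eq_one_iff] at h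
  obtain ⟨x, hx⟩ := h
  rw [← map_pow, ← finrank_int]
  refine (ClassGroup.mk0_eq_one_iff (pow_mem I.2 _)).mpr ?_
  have := Ideal.relNorm_algebraMap (𝓞 K) I.1
  rw [hx, Ideal.submodule_span_eq, Ideal.relNorm_singleton] at this
  change (I.1 ^ _).IsPrincipal
  rw [← this]
  exact ⟨_, rfl⟩

theorem relNorm_conj (σ : K ≃ₐ[F] K) (I : Ideal (𝓞 K)) :
    Ideal.relNorm (𝓞 F) (I.map (RingOfIntegers.mapRingEquiv σ.toRingEquiv : 𝓞 K →+* 𝓞 K)) =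
      Ideal.relNorm (𝓞 F) I :=
  Ideal.relNorm_map_algEquiv (RingOfIntegers.mapAlgEquiv σ) I

theorem prod_conj_eq [IsGalois F K] (I : Ideal (𝓞 K)) (hI : I ≠ ⊥) :
    ∏ σ : K ≃ₐ[F] K, I.map (RingOfIntegers.mapRingEquiv σ.toRingEquiv : 𝓞 K →+* 𝓞 K) =
      (Ideal.relNorm (𝓞 F) I).map (algebraMap (𝓞 F) (𝓞 K)) := by
  set M := ∏ σ : K ≃ₐ[F] K, I.map (RingOfIntegers.mapRingEquiv σ.toRingEquiv : 𝓞 K →+* 𝓞 K)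
  set N := (Ideal.relNorm (𝓞 F) I).map (algebraMap (𝓞 F) (𝓞 K)) with hN
  have hNM : N ≤ M := by
    rw [hN, Ideal.map_relNorm, Ideal.span_le]
    rintro _ ⟨x, hx, rfl⟩
    have : (algebraMap (𝓞 F) (𝓞 K)) (Algebra.intNorm (𝓞 F) (𝓞 K) x) =
        ∏ σ : K ≃ₐ[F] K, RingOfIntegers.mapRingEquiv σ.toRingEquiv x := by
      apply RingOfIntegers.coe_injective
      rw [← IsScalarTower.algebraMap_apply, IsScalarTower.algebraMap_apply (𝓞 F) F K,
        Algebra.algebraMap_intNorm (K := F) (L := K), Algebra.norm_eq_prod_automorphisms, map_prod]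
      rfl
    change (algebraMap (𝓞 F) (𝓞 K)) (Algebra.intNorm (𝓞 F) (𝓞 K) x) ∈ M
    rw [this]
    exact Ideal.prod_mem_prod fun σ _ => Ideal.mem_map_of_mem _ hx
  have hM : Ideal.relNorm (𝓞 F) M = Ideal.relNorm (𝓞 F) I ^ Module.finrank F K := by
    rw [map_prod]
    simp only [relNorm_conj, Finset.prod_const, Finset.card_univ]
    rw [← Nat.card_eq_fintype_card, IsGalois.card_aut_eq_finrank]
  have hN' : Ideal.relNorm (𝓞 F) N = Ideal.relNorm (𝓞 F) I ^ Module.finrank F K := by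
    rw [Ideal.relNorm_algebraMap, finrank_int]
  obtain ⟨Q, hQ⟩ := Ideal.dvd_iff_le.mpr hNM
  have h0 : Ideal.relNorm (𝓞 F) I ^ Module.finrank F K ≠ 0 :=
    pow_ne_zero _ (fun h => hI (Ideal.relNorm_eq_bot_iff.mp h))
  have hQ1 : Ideal.relNorm (𝓞 F) Q = 1 := by
    have := congrArg (Ideal.relNorm (𝓞 F)) hQ
    rw [map_mul, hM, hN'] at this
    exact (mul_eq_left₀ h0).mp this.symm
  have : Q = ⊤ := by
    have h1 := Ideal.relNorm_le_comap (𝓞 F) Q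
    rw [hQ1, Ideal.one_eq_top, top_le_iff, Ideal.comap_eq_top_iff] at h1
    exact h1
  rw [hQ, this, ← Ideal.one_eq_top, mul_one]

theorem fixed_pow [IsGalois F K] (c : ClassGroup (𝓞 K))
    (h : ∀ σ : K ≃ₐ[F] K, clAct σ.toRingEquiv c = c) :
    c ^ Module.finrank F K ∈ (ClassGroup.extendedHom (𝓞 F) (𝓞 K)).range := by
  obtain ⟨I, rfl⟩ := ClassGroup.mk0_surjective c
  have hI : I.1 ≠ ⊥ := mem_nonZeroDivisors_iff_ne_zero.mp I.2
  refine ⟨ClassGroup.mk0 ⟨Ideal.relNorm (𝓞 F) I.1, mem_nonZeroDivisors_iff_ne_zero.mpr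
    (fun h => hI (Ideal.relNorm_eq_bot_iff.mp h))⟩, ?_⟩
  have h1 : ∏ σ : K ≃ₐ[F] K, clAct σ.toRingEquiv (ClassGroup.mk0 I) =
      ClassGroup.mk0 I ^ Module.finrank F K := by
    simp only [h, Finset.prod_const, Finset.card_univ]
    rw [← Nat.card_eq_fintype_card, IsGalois.card_aut_eq_finrank]
  rw [← h1, ClassGroup.extendedHom_mk0]
  simp only [clAct_mk0]
  rw [← map_prod]
  congr 1
  apply Subtype.ext
  rw [Submonoid.coe_finsetProd]
  exact (prod_conj_eq I.1 hI).symm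

end rel

end aux

theorem oddpart_of_mul {n m a : ℕ} (hn : n = m * 2 ^ a) (hm : Odd m) :
    n / 2 ^ n.factorization 2 = m := by
  have h2 : ¬ 2 ∣ m := by rw [← even_iff_two_dvd]; exact Nat.not_even_iff_odd.mpr hm
  have hm0 : m ≠ 0 := by rintro rfl; simp at hm
  have : n.factorization 2 = a := by
    rw [hn, Nat.factorization_mul hm0 (by positivity)]
    simp [Nat.factorization_eq_zero_of_not_dvd h2, Nat.prime_two.factorization_pow]
  rw [this, hn]
  exact Nat.mul_div_cancel _ (by positivity)

theorem card_pow_two_of_exp {G : Type*} [CommGroup G] [Finite G] (n : ℕ)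
    (h : ∀ g : G, g ^ 2 ^ n = 1) : ∃ a, Nat.card G = 2 ^ a := by
  have : Fact (Nat.Prime 2) := ⟨Nat.prime_two⟩
  exact IsPGroup.iff_card.mp (fun g => ⟨n, h g⟩)

/-- odd part of a finite commutative group -/
theorem exists_odd_part (B : Type*) [CommGroup B] [Finite B] :
    ∃ (O : Subgroup B) (v : ℕ), Odd (Nat.card O) ∧ (∀ b : B, b ^ 2 ^ v ∈ O) ∧
      ∀ s : B →* B, ∀ b ∈ O, s b ∈ O := by
  obtain ⟨v, m, hm, hc⟩ := Nat.exists_eq_two_pow_mul_odd (n := Nat.card B) Nat.card_pos.ne'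
  refine ⟨(powMonoidHom (2 ^ v) : B →* B).range, v, ?_, fun b => ⟨b, rfl⟩, ?_⟩
  · rw [← Nat.not_even_iff_odd, even_iff_two_dvd]
    intro h2
    have : Fact (Nat.Prime 2) := ⟨Nat.prime_two⟩
    obtain ⟨x, hx⟩ := exists_prime_orderOf_dvd_card' 2 h2
    obtain ⟨y, hy⟩ := x.2
    have h1 : x ^ m = 1 := by
      apply Subtype.ext
      rw [Subgroup.coe_pow, ← hy, powMonoidHom_apply, ← pow_mul, ← hc, pow_card_eq_one']
      rfl
    have := orderOf_dvd_of_pow_eq_one h1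
    rw [hx, ← even_iff_two_dvd] at this
    exact Nat.not_even_iff_odd.mpr hm this
  · rintro s _ ⟨y, rfl⟩
    exact ⟨s y, by simp⟩

theorem odd_sqrt {B : Type*} [CommGroup B] [Finite B] (H : Subgroup B) (hH : Odd (Nat.card H))
    (n : ℕ) (y : B) (hy : y ∈ H) : ∃ e : ℕ, (y ^ 2 ^ n) ^ e = y := by
  apply exists_pow_eq_self_of_coprime
  refine Nat.Coprime.pow_left n (Nat.coprime_two_left.mpr ?_)
  exact Odd.of_dvd_nat hH (Subgroup.orderOf_dvd_natCard H hy)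

theorem card_fix_anti {B : Type*} [CommGroup B] [Finite B] (s : B →* B)
    (hs : ∀ b, s (s b) = b) (H : Subgroup B) (hH : Odd (Nat.card H)) (hst : ∀ b ∈ H, s b ∈ H)
    (P M : Subgroup B) (hP : ∀ b, b ∈ P ↔ b ∈ H ∧ s b = b)
    (hM : ∀ b, b ∈ M ↔ b ∈ H ∧ s b = b⁻¹) :
    Nat.card H = Nat.card P * Nat.card M := by
  let f : B →* B := MonoidHom.id B * s
  have hf : ∀ b, f b = b * s b := fun b => rfl
  have hr : H.map f = P := by
    ext b
    rw [hP, Subgroup.mem_map]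
    constructor
    · rintro ⟨x, hx, rfl⟩
      exact ⟨H.mul_mem hx (hst x hx), by rw [hf, map_mul, hs, mul_comm]⟩
    · rintro ⟨hb, hsb⟩
      obtain ⟨e, he⟩ := odd_sqrt H hH 1 b hb
      refine ⟨b ^ e, H.pow_mem hb e, ?_⟩
      rw [hf, map_pow, hsb, ← pow_two]
      rwa [pow_one, ← pow_mul, mul_comm, pow_mul] at he
  have h1 := Subgroup.card_eq_card_quotient_mul_card_subgroup (f.comp H.subtype).ker
  rw [h1, Nat.card_congr (QuotientGroup.quotientKerEquivRange (f.comp H.subtype)).toEquiv,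
    MonoidHom.range_comp, Subgroup.range_subtype, hr]
  congr 1
  refine Nat.card_congr ⟨fun x => ⟨x.1.1, (hM _).mpr ⟨x.1.2, ?_⟩⟩,
    fun x => ⟨⟨x.1, ((hM _).mp x.2).1⟩, ?_⟩, fun x => rfl, fun x => rfl⟩
  · have : x.1.1 * s x.1.1 = 1 := x.2
    exact (inv_eq_of_mul_eq_one_right this).symm
  · change x.1 * s x.1 = 1
    rw [((hM _).mp x.2).2, mul_inv_cancel]

/-- The key card formula. -/
theorem oddpart_of_hom {A B : Type*} [CommGroup A] [Finite A] [CommGroup B] [Finite B]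
    (f : A →* B) (H : Subgroup B) (hH : Odd (Nat.card H)) (n v : ℕ)
    (hker : ∀ a, f a = 1 → a ^ 2 ^ n = 1) (hr : ∀ a, (f a) ^ 2 ^ v ∈ H)
    (hHr : ∀ b ∈ H, b ^ 2 ^ n ∈ f.range) :
    Nat.card A / 2 ^ (Nat.card A).factorization 2 = Nat.card H := by
  have hle : H ≤ f.range := by
    intro b hb
    obtain ⟨e, he⟩ := odd_sqrt H hH n b hb
    rw [← he]
    exact Subgroup.pow_mem _ (hHr b hb) e
  obtain ⟨a, ha⟩ := card_pow_two_of_exp (G := f.ker) n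
    (fun g => Subtype.ext (by simpa using hker g.1 g.2))
  obtain ⟨c, hc⟩ := card_pow_two_of_exp (G := f.range ⧸ H.subgroupOf f.range) v (by
    intro g
    obtain ⟨⟨x, y, rfl⟩, rfl⟩ := QuotientGroup.mk_surjective g
    rw [← QuotientGroup.mk_pow, QuotientGroup.eq_one_iff, Subgroup.mem_subgroupOf]
    exact hr y)
  apply oddpart_of_mul (a := c + a) _ hH
  rw [Subgroup.card_eq_card_quotient_mul_card_subgroup f.ker, ha,
    Nat.card_congr (QuotientGroup.quotientKerEquivRange f).toEquiv,
    Subgroup.card_eq_card_quotient_mul_card_subgroup (H.subgroupOf f.range), hc,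
    Nat.card_congr (Subgroup.subgroupOfEquivOfLe hle).toEquiv]
  ring

theorem hodd_eq {F K : Type*} [Field F] [Field K] [NumberField F] [NumberField K] [Algebra F K]
    [IsGalois F K] (n : ℕ) (hn : Module.finrank F K = 2 ^ n)
    (O : Subgroup (ClassGroup (𝓞 K))) (v : ℕ) (hO : Odd (Nat.card O))
    (hv : ∀ b, b ^ 2 ^ v ∈ O) (H : Subgroup (ClassGroup (𝓞 K)))
    (hH : ∀ b, b ∈ H ↔ b ∈ O ∧ ∀ σ : K ≃ₐ[F] K, clAct σ.toRingEquiv b = b) :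
    hodd F = Nat.card H := by
  have hle : H ≤ O := fun b hb => ((hH b).mp hb).1
  refine oddpart_of_hom (ClassGroup.extendedHom (𝓞 F) (𝓞 K)) H
    (Odd.of_dvd_nat hO (Subgroup.card_dvd_of_le hle)) n v ?_ ?_ ?_
  · intro a ha
    rw [← hn]
    exact ker_ext_pow a ha
  · intro a
    rw [hH]
    exact ⟨hv _, fun σ => by rw [map_pow, clAct_ext]⟩
  · intro b hb
    rw [← hn]
    exact fixed_pow b ((hH b).mp hb).2

/-- the nontrivial element of the Galois group of a quadratic subextension -/
theorem exists_invol {k K : Type*} [Field k] [Field K] [Algebra k K] [FiniteDimensional k K]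
    [IsGalois k K] (E : IntermediateField k K) (hE : Module.finrank E K = 2) :
    ∃ s : K ≃ₐ[k] K, s ≠ 1 ∧ s * s = 1 ∧ (∀ x, x ∈ E ↔ s x = x) ∧
      (∀ τ : K ≃ₐ[E] K, (∀ x, τ x = x) ∨ ∀ x, τ x = s x) ∧
      ∃ τ : K ≃ₐ[E] K, ∀ x, τ x = s x := by
  have hc : Nat.card (K ≃ₐ[E] K) = 2 := by rw [IsGalois.card_aut_eq_finrank, hE]
  obtain ⟨σ, hσ, huniq⟩ := (Nat.card_eq_two_iff' (1 : K ≃ₐ[E] K)).mp hc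
  have hτ : ∀ τ : K ≃ₐ[E] K, τ = 1 ∨ τ = σ := fun τ => by
    by_cases h : τ = 1
    · exact Or.inl h
    · exact Or.inr (huniq τ h)
  have hσσ : σ * σ = 1 := by
    rcases hτ (σ * σ) with h | h
    · exact h
    · exact absurd (mul_eq_left.mp h) hσ
  refine ⟨σ.restrictScalars k, ?_, ?_, ?_, ?_, σ, fun x => rfl⟩
  · intro h
    apply hσ
    ext x
    exact DFunLike.congr_fun h x
  · ext x
    exact DFunLike.congr_fun hσσ x
  · intro x
    constructor
    · intro hx
      exact σ.commutes ⟨x, hx⟩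
    · intro hx
      have : x ∈ (⊥ : IntermediateField E K) := by
        rw [IsGalois.mem_bot_iff_fixed]
        intro τ
        rcases hτ τ with rfl | rfl
        · rfl
        · exact hx
      obtain ⟨y, rfl⟩ := IntermediateField.mem_bot.mp this
      exact y.2
  · intro τ
    rcases hτ τ with rfl | rfl
    · exact Or.inl fun x => rfl
    · exact Or.inr fun x => rfl

/-- subgroup of `O` where `s` acts as inversion or trivially -/
def fixSub {B : Type*} [CommGroup B] (O : Subgroup B) (s : B →* B) : Subgroup B :=
  O ⊓ s.eqLocus (MonoidHom.id B)

def antiSub {B : Type*} [CommGroup B] (O : Subgroup B) (s : B →* B) : Subgroup B :=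
  O ⊓ s.eqLocus (MonoidHom.id B)⁻¹

theorem mem_fixSub {B : Type*} [CommGroup B] (O : Subgroup B) (s : B →* B) (b : B) :
    b ∈ fixSub O s ↔ b ∈ O ∧ s b = b := Iff.rfl

theorem mem_antiSub {B : Type*} [CommGroup B] (O : Subgroup B) (s : B →* B) (b : B) :
    b ∈ antiSub O s ↔ b ∈ O ∧ s b = b⁻¹ := Iff.rfl

theorem v4_card {B : Type*} [CommGroup B] [Finite B] (O : Subgroup B) (hO : Odd (Nat.card O))
    (hst : ∀ s : B →* B, ∀ b ∈ O, s b ∈ O) (s₁ s₂ s₃ : B →* B)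
    (h1 : ∀ b, s₁ (s₁ b) = b) (h2 : ∀ b, s₂ (s₂ b) = b)
    (h12 : ∀ b, s₁ (s₂ b) = s₃ b) (h21 : ∀ b, s₂ (s₁ b) = s₃ b) :
    Nat.card O * Nat.card (fixSub (fixSub O s₁) s₂) ^ 2 =
      Nat.card (fixSub O s₁) * Nat.card (fixSub O s₂) * Nat.card (fixSub O s₃) := by
  have odd_le : ∀ H : Subgroup B, H ≤ O → Odd (Nat.card H) := fun H h =>
    Odd.of_dvd_nat hO (Subgroup.card_dvd_of_le h)
  have hF : ∀ s, fixSub O s ≤ O := fun s b hb => hb.1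
  have hA : ∀ s, antiSub O s ≤ O := fun s b hb => hb.1
  have e0 := card_fix_anti s₁ h1 O hO (hst s₁) (fixSub O s₁) (antiSub O s₁)
    (mem_fixSub O s₁) (mem_antiSub O s₁)
  have e1 := card_fix_anti s₂ h2 (fixSub O s₁) (odd_le _ (hF _))
    (fun b hb => ⟨hst _ _ hb.1, by
      have : s₁ b = b := hb.2
      change s₁ (s₂ b) = s₂ b
      rw [h12, ← h21, this]⟩) _ _ (mem_fixSub _ s₂) (mem_antiSub _ s₂)
  have e2 := card_fix_anti s₂ h2 (antiSub O s₁) (odd_le _ (hA _))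
    (fun b hb => ⟨hst _ _ hb.1, by
      have : s₁ b = b⁻¹ := hb.2
      change s₁ (s₂ b) = (s₂ b)⁻¹
      rw [h12, ← h21, this, map_inv]⟩) _ _ (mem_fixSub _ s₂) (mem_antiSub _ s₂)
  have e3 := card_fix_anti s₁ h1 (fixSub O s₂) (odd_le _ (hF _))
    (fun b hb => ⟨hst _ _ hb.1, by
      have : s₂ b = b := hb.2
      change s₂ (s₁ b) = s₁ b
      rw [h21, ← h12, this]⟩) (fixSub (fixSub O s₁) s₂) (fixSub (antiSub O s₁) s₂)
    (fun b => by simp only [mem_fixSub]; tauto)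
    (fun b => by simp only [mem_fixSub, mem_antiSub]; tauto)
  have e4 := card_fix_anti s₁ h1 (fixSub O s₃) (odd_le _ (hF _))
    (fun b hb => ⟨hst _ _ hb.1, by
      have : s₃ b = b := hb.2
      change s₃ (s₁ b) = s₁ b
      rw [← h12, h21, this]⟩) (fixSub (fixSub O s₁) s₂) (antiSub (antiSub O s₁) s₂)
    (fun b => by
      simp only [mem_fixSub, ← h21]
      constructor
      · rintro ⟨⟨a, b⟩, c⟩
        refine ⟨⟨a, ?_⟩, b⟩
        rw [b, c]
      · rintro ⟨⟨a, b⟩, c⟩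
        refine ⟨⟨a, c⟩, ?_⟩
        rwa [c] at b)
    (fun b => by
      simp only [mem_fixSub, mem_antiSub, ← h21]
      constructor
      · rintro ⟨⟨a, b⟩, c⟩
        refine ⟨⟨a, ?_⟩, b⟩
        rw [b, map_inv, c, inv_inv]
      · rintro ⟨⟨a, b⟩, c⟩
        refine ⟨⟨a, c⟩, ?_⟩
        rwa [c, map_inv, inv_eq_iff_eq_inv] at b)
  rw [e0, e3, e4, e2]
  rw [e1]
  ring

/-- Lemmermeyer: for a `V₄`-extension `K/k` of number fields with the three intermediate
fields `k₁, k₂, k₃`, one has `h_odd(K) · h_odd(k)² = h_odd(k₁) · h_odd(k₂) · h_odd(k₃)`,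
the cardinality form of `Cl_odd(K) ≅ Cl_odd(k) × ∏ⱼ Cl_odd(kⱼ)/Cl_odd(k)`. -/
theorem stmt19 (k K : Type*) [Field k] [Field K] [NumberField k] [NumberField K]
    [Algebra k K] [IsGalois k K]
    (hgal : Nonempty ((K ≃ₐ[k] K) ≃*
      (Multiplicative (ZMod 2) × Multiplicative (ZMod 2))))
    (k₁ k₂ k₃ : IntermediateField k K)
    (h12 : k₁ ≠ k₂) (h13 : k₁ ≠ k₃) (h23 : k₂ ≠ k₃)
    (hd1 : Module.finrank k k₁ = 2) (hd2 : Module.finrank k k₂ = 2)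
    (hd3 : Module.finrank k k₃ = 2)
    (hd1' : Module.finrank k₁ K = 2) (hd2' : Module.finrank k₂ K = 2)
    (hd3' : Module.finrank k₃ K = 2) :
    hodd K * hodd k ^ 2 = hodd k₁ * hodd k₂ * hodd k₃ := by
  have hcard : Nat.card (K ≃ₐ[k] K) = 4 := by
    rw [Nat.card_congr hgal.some.toEquiv]
    simp
  obtain ⟨s₁, n1, q1, f1, g1, t1⟩ := exists_invol k₁ hd1'
  obtain ⟨s₂, n2, q2, f2, g2, t2⟩ := exists_invol k₂ hd2'
  obtain ⟨s₃, n3, q3, f3, g3, t3⟩ := exists_invol k₃ hd3'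
  have d12 : s₁ ≠ s₂ := by
    rintro rfl
    exact h12 (IntermediateField.ext fun x => (f1 x).trans (f2 x).symm)
  have d13 : s₁ ≠ s₃ := by
    rintro rfl
    exact h13 (IntermediateField.ext fun x => (f1 x).trans (f3 x).symm)
  have d23 : s₂ ≠ s₃ := by
    rintro rfl
    exact h23 (IntermediateField.ext fun x => (f2 x).trans (f3 x).symm)
  have hall : ∀ τ : K ≃ₐ[k] K, τ = 1 ∨ τ = s₁ ∨ τ = s₂ ∨ τ = s₃ := by
    classical
    have hu : ({1, s₁, s₂, s₃} : Finset (K ≃ₐ[k] K)) = Finset.univ := by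
      rw [← Finset.card_eq_iff_eq_univ, ← Nat.card_eq_fintype_card, hcard]
      rw [Finset.card_insert_of_notMem, Finset.card_insert_of_notMem,
        Finset.card_insert_of_notMem, Finset.card_singleton]
      · simpa using d23
      · simpa using ⟨d12, d13⟩
      · simpa using ⟨n1.symm, n2.symm, n3.symm⟩
    intro τ
    have := Finset.mem_univ τ
    rw [← hu] at this
    simpa using this
  have i1 : s₁⁻¹ = s₁ := inv_eq_of_mul_eq_one_right q1
  have i2 : s₂⁻¹ = s₂ := inv_eq_of_mul_eq_one_right q2
  have m12 : s₁ * s₂ = s₃ := by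
    rcases hall (s₁ * s₂) with h | h | h | h
    · exact absurd (i1.symm.trans (inv_eq_of_mul_eq_one_right h)) d12
    · exact absurd (mul_eq_left.mp h) n2
    · exact absurd (mul_eq_right.mp h) n1
    · exact h
  have m21 : s₂ * s₁ = s₃ := by
    rcases hall (s₂ * s₁) with h | h | h | h
    · exact absurd (i2.symm.trans (inv_eq_of_mul_eq_one_right h)) d12.symm
    · exact absurd (mul_eq_right.mp h) n2
    · exact absurd (mul_eq_left.mp h) n1
    · exact h
  obtain ⟨O, v, hO, hv, hst⟩ := exists_odd_part (ClassGroup (𝓞 K))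
  have hcomp : ∀ a b c : K ≃ₐ[k] K, a * b = c → ∀ x,
      clAct a.toRingEquiv (clAct b.toRingEquiv x) = clAct c.toRingEquiv x := by
    rintro a b c rfl x
    exact clAct_comp _ _ _ (fun _ => rfl) x
  have hone : ∀ x, clAct (1 : K ≃ₐ[k] K).toRingEquiv x = x :=
    clAct_id _ (fun _ => rfl)
  have hK : hodd K = Nat.card O :=
    oddpart_of_hom (MonoidHom.id _) O hO 0 v (fun a ha => by simpa using ha) hv
      (fun b _ => ⟨_, rfl⟩)
  have hj : ∀ (E : IntermediateField k K) (s : K ≃ₐ[k] K), Module.finrank E K = 2 →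
      (∀ τ : K ≃ₐ[E] K, (∀ x, τ x = x) ∨ ∀ x, τ x = s x) →
      (∃ τ : K ≃ₐ[E] K, ∀ x, τ x = s x) →
      hodd E = Nat.card (fixSub O (clAct s.toRingEquiv)) := by
    intro E s hE hg ht
    refine hodd_eq 1 (by rw [hE, pow_one]) O v hO hv _ (fun b => ?_)
    rw [mem_fixSub]
    refine and_congr_right fun _ => ⟨fun h τ => ?_, fun h => ?_⟩
    · rcases hg τ with h' | h'
      · exact clAct_id _ h' b
      · have : τ.toRingEquiv = s.toRingEquiv := RingEquiv.ext h'
        rw [this, h]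
    · obtain ⟨τ, h'⟩ := ht
      have : τ.toRingEquiv = s.toRingEquiv := RingEquiv.ext h'
      rw [← this, h]
  have hk : hodd k = Nat.card (fixSub (fixSub O (clAct s₁.toRingEquiv))
      (clAct s₂.toRingEquiv)) := by
    refine hodd_eq 2 (by rw [← IsGalois.card_aut_eq_finrank, hcard]; norm_num) O v hO hv _ (fun b => ?_)
    rw [mem_fixSub, mem_fixSub]
    constructor
    · rintro ⟨⟨h0, h1⟩, h2⟩
      refine ⟨h0, fun τ => ?_⟩
      rcases hall τ with rfl | rfl | rfl | rfl
      · exact hone b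
      · exact h1
      · exact h2
      · rw [← hcomp _ _ _ m12, h2, h1]
    · rintro ⟨h0, h⟩
      exact ⟨⟨h0, h _⟩, h _⟩
  rw [hK, hk, hj k₁ s₁ hd1' g1 t1, hj k₂ s₂ hd2' g2 t2, hj k₃ s₃ hd3' g3 t3]
  exact v4_card O hO hst _ _ _
    (fun b => by rw [hcomp _ _ _ q1, hone]) (fun b => by rw [hcomp _ _ _ q2, hone])
    (hcomp _ _ _ m12) (hcomp _ _ _ m21)
end
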